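/- Let M be a finitely generated ℤ-graded R-module of Krull dimension d and let P_1, …, P_t be the minimal prime ideals of dimension d in the support of M. Then for every complex number y, F(M,R,I,d)(y) = Σ_{j=1}^{t} λ_{R_{P_j}}(M_{P_j}) · F(R/P_j, R/P_j, I·(R/P_j), d)(y), where λ_{R_{P_j}}(M_{P_j}) is the length of the localization M_{P_j} over the local ring R_{P_j}. -/

import Mathlib

open Filter Complex

set_option maxHeartbeats 1000000

noncomputable section

/-- The Frobenius bracket power `I^{[q]}` of an ideal. -/
def bracketPow {R : Type*} [CommSemiring R] (I : Ideal R) (q : ℕ) : Ideal R :=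
  Ideal.span ((fun x : R => x ^ q) '' (I : Set R))

/-- `λ_k((M/N)_j)`. -/
def quotPieceDim (k : Type*) {R M : Type*} [Field k] [CommRing R] [Algebra k R]
    [AddCommGroup M] [Module R M] [Module k M] [IsScalarTower k R M]
    (ℳ : ℤ → Submodule k M) (N : Submodule R M) (j : ℤ) : ℕ :=
  Module.finrank k ((ℳ j).map (N.mkQ.restrictScalars k))

/-- `F_n(M,R,I,d)(y)`. -/
def FnGen (k : Type*) {R M : Type*} [Field k] [CommRing R] [Algebra k R]
    [AddCommGroup M] [Module R M] [Module k M] [IsScalarTower k R M]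
    (ℳ : ℤ → Submodule k M) (I : Ideal R) (p d n : ℕ) (y : ℂ) : ℂ :=
  (1 / (p : ℂ) ^ n) ^ d *
    ∑' j : ℤ, (quotPieceDim k (R := R) ℳ (bracketPow I (p ^ n) • ⊤) j : ℂ) *
      Complex.exp (-Complex.I * y * (j : ℂ) / (p : ℂ) ^ n)

/-- The length of a module, as the Krull dimension of its lattice of submodules. -/
def moduleLength (R M : Type*) [CommRing R] [AddCommGroup M] [Module R M] : WithBot ℕ∞ :=
  Order.krullDim (Submodule R M)

open Filter Complex
set_option maxHeartbeats 1000000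
noncomputable section
namespace FP
section rl
variable {k M M' : Type*} [Field k] [AddCommGroup M] [Module k M] [AddCommGroup M'] [Module k M']

/-- relative length: dimension of the image of `X` in `M/W`. -/
def rl (W X : Submodule k M) : ℕ∞ := Module.length k (X.map W.mkQ)

lemma rl_le (f : M →ₗ[k] M') {W X : Submodule k M} {W' X' : Submodule k M'}
    (h1 : ∀ x ∈ X, x ∈ W → f x ∈ W') (h2 : X' ≤ X.map f ⊔ W') : rl W' X' ≤ rl W X := by
  have e1 : X.map W.mkQ = LinearMap.range (W.mkQ ∘ₗ X.subtype) := by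
    rw [LinearMap.range_comp, Submodule.range_subtype]
  have e2 : X'.map W'.mkQ ≤ LinearMap.range (W'.mkQ ∘ₗ f ∘ₗ X.subtype) := by
    rw [LinearMap.range_comp, LinearMap.range_comp, Submodule.range_subtype]
    refine (Submodule.map_mono h2).trans ?_
    rw [Submodule.map_sup]
    simp
  unfold rl
  refine (Module.length_le_of_injective (Submodule.inclusion e2) (Submodule.inclusion_injective e2)).trans ?_
  rw [e1]
  have hk : LinearMap.ker (W.mkQ ∘ₗ X.subtype) ≤ LinearMap.ker (W'.mkQ ∘ₗ f ∘ₗ X.subtype) := by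
    intro x hx
    simp only [LinearMap.mem_ker, LinearMap.comp_apply, Submodule.subtype_apply,
      Submodule.mkQ_apply, Submodule.Quotient.mk_eq_zero] at hx ⊢
    exact h1 _ x.2 hx
  rw [← (LinearMap.quotKerEquivRange (W.mkQ ∘ₗ X.subtype)).length_eq,
    ← (LinearMap.quotKerEquivRange (W'.mkQ ∘ₗ f ∘ₗ X.subtype)).length_eq]
  exact Module.length_le_of_surjective (Submodule.factor hk) (Submodule.factor_surjective hk)

lemma rl_mono {W X W' X' : Submodule k M} (hW : W ≤ W') (hX : X' ≤ X ⊔ W') : rl W' X' ≤ rl W X :=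
  rl_le LinearMap.id (fun _ _ h => hW h) (by simpa using hX)

lemma rl_zero_iff {W X : Submodule k M} : rl W X = 0 ↔ X ≤ W := by
  unfold rl
  rw [Module.length_eq_zero_iff, Submodule.subsingleton_iff_eq_bot, ← le_bot_iff,
    Submodule.map_le_iff_le_comap]
  simp

lemma rl_add {W V : Submodule k M} (h : W ≤ V) (X : Submodule k M) :
    rl W X = rl W (X ⊓ V) + rl V X := by
  unfold rl
  have hle : (X ⊓ V).map W.mkQ ≤ X.map W.mkQ := Submodule.map_mono inf_le_left
  have hm : ∀ z ∈ X.map W.mkQ, Submodule.factor h z ∈ X.map V.mkQ := by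
    rintro _ ⟨x, hx, rfl⟩
    exact ⟨x, hx, rfl⟩
  refine Module.length_eq_add_of_exact (Submodule.inclusion hle)
    ((Submodule.factor h).restrict hm) (Submodule.inclusion_injective hle) ?_ ?_
  · rintro ⟨_, ⟨x, hx, rfl⟩⟩
    exact ⟨⟨W.mkQ x, ⟨x, hx, rfl⟩⟩, rfl⟩
  · rintro ⟨_, ⟨x, hx, rfl⟩⟩
    constructor
    · intro hz
      have hz' : V.mkQ x = 0 := congrArg Subtype.val hz
      have hxV : x ∈ V := by simpa using hz'
      exact ⟨⟨W.mkQ x, ⟨x, ⟨hx, hxV⟩, rfl⟩⟩, rfl⟩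
    · rintro ⟨⟨_, ⟨z, hz, rfl⟩⟩, he⟩
      have he' : W.mkQ z = W.mkQ x := congrArg Subtype.val he
      apply Subtype.ext
      change V.mkQ x = 0
      have : z - x ∈ W := by
        rw [← Submodule.Quotient.mk_eq_zero]; simpa [sub_eq_zero] using he'
      have hx' : x ∈ V := by
        have := V.sub_mem hz.2 (h this)
        simpa using this
      simpa using hx'

lemma rl_sup_le (W X Y : Submodule k M) : rl W (X ⊔ Y) ≤ rl W X + rl W Y := by
  rw [rl_add (le_sup_left : W ≤ W ⊔ X) (X ⊔ Y)]
  gcongr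
  · exact rl_mono le_rfl (inf_le_right.trans (by rw [sup_comm]))
  · apply rl_mono le_sup_left
    refine sup_le (le_sup_right.trans le_sup_right) le_sup_left

lemma rl_sum_le {ι : Type*} (s : Finset ι) (W : Submodule k M) (X : ι → Submodule k M) :
    rl W (⨆ i ∈ s, X i) ≤ ∑ i ∈ s, rl W (X i) := by
  classical
  induction s using Finset.induction_on with
  | empty => simp [rl_zero_iff]
  | insert a s ha ih =>
    rw [Finset.iSup_insert, Finset.sum_insert ha]
    exact (rl_sup_le _ _ _).trans (by gcongr)

lemma rl_eq (f : M →ₗ[k] M') {W X : Submodule k M} {W' : Submodule k M'}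
    (h1 : ∀ x ∈ X, x ∈ W ↔ f x ∈ W') : rl W' (X.map f) = rl W X := by
  have e1 : X.map W.mkQ = LinearMap.range (W.mkQ ∘ₗ X.subtype) := by
    rw [LinearMap.range_comp, Submodule.range_subtype]
  have e2 : (X.map f).map W'.mkQ = LinearMap.range (W'.mkQ ∘ₗ f ∘ₗ X.subtype) := by
    rw [LinearMap.range_comp, LinearMap.range_comp, Submodule.range_subtype]
  have hk : LinearMap.ker (W.mkQ ∘ₗ X.subtype) = LinearMap.ker (W'.mkQ ∘ₗ f ∘ₗ X.subtype) := by
    ext x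
    simp only [LinearMap.mem_ker, LinearMap.comp_apply, Submodule.subtype_apply,
      Submodule.mkQ_apply, Submodule.Quotient.mk_eq_zero]
    exact h1 _ x.2
  unfold rl
  rw [e1, e2]
  rw [← (LinearMap.quotKerEquivRange (W.mkQ ∘ₗ X.subtype)).length_eq,
    ← (LinearMap.quotKerEquivRange (W'.mkQ ∘ₗ f ∘ₗ X.subtype)).length_eq]
  rw [hk]

lemma rl_toNat (W X : Submodule k M) : (rl W X).toNat = Module.finrank k (X.map W.mkQ) := by
  unfold rl
  rw [Module.length_eq_rank]
  rfl

/-- `X` in `X ⊔ V` compared through second isomorphism -/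
lemma rl_sup_left (W X : Submodule k M) (V : Submodule k M) (hV : V ≤ W) :
    rl W (X ⊔ V) = rl W X :=
  le_antisymm (rl_mono le_rfl (sup_le_sup_left hV _)) (rl_mono le_rfl (by
    exact le_sup_left.trans le_sup_left))

lemma rl_inf (W X : Submodule k M) : rl (W ⊓ X) X = rl W X :=
  le_antisymm
   (by
    have h := rl_eq (W := W ⊓ X) (X := X) (W' := W) LinearMap.id (fun x hx => by simp [hx])
    rw [Submodule.map_id] at h
    exact h.ge) (rl_mono inf_le_left le_sup_left)

end rl

section graded
variable {k M : Type*} [Field k] [AddCommGroup M] [Module k M]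
  (ℳ : ℤ → Submodule k M) [DirectSum.Decomposition ℳ]

/-- homogeneous subspace -/
def Hg (N : Submodule k M) : Prop := ∀ x ∈ N, ∀ j, (DirectSum.decompose ℳ x j : M) ∈ N

variable {ℳ}
lemma Hg.sup {N N' : Submodule k M} (h : Hg ℳ N) (h' : Hg ℳ N') : Hg ℳ (N ⊔ N') := by
  intro x hx j
  obtain ⟨y, hy, z, hz, rfl⟩ := Submodule.mem_sup.1 hx
  rw [DirectSum.decompose_add]
  exact Submodule.add_mem_sup (h y hy j) (h' z hz j)

lemma Hg.inf {N N' : Submodule k M} (h : Hg ℳ N) (h' : Hg ℳ N') : Hg ℳ (N ⊓ N') :=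
  fun x hx j => ⟨h x hx.1 j, h' x hx.2 j⟩

lemma Hg.top : Hg ℳ (⊤ : Submodule k M) := fun _ _ _ => trivial
lemma Hg.bot : Hg ℳ (⊥ : Submodule k M) := by
  intro x hx j
  rw [Submodule.mem_bot] at hx
  subst hx
  simp

/-- a homogeneous space is contained in `N'` as soon as its homogeneous elements are. -/
lemma Hg.le {N N' : Submodule k M} (h : Hg ℳ N) (h' : ∀ j, ∀ x ∈ N, x ∈ ℳ j → x ∈ N') : N ≤ N' := by
  intro x hx
  classical
  rw [← DirectSum.sum_support_decompose ℳ x]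
  exact Submodule.sum_mem _ fun j _ => h' j _ (h x hx j) (SetLike.coe_mem _)

lemma Hg.span {S : Set M} (h : ∀ x ∈ S, ∃ j, x ∈ ℳ j) : Hg ℳ (Submodule.span k S) := by
  intro x hx j
  induction hx using Submodule.span_induction with
  | mem x hx =>
    obtain ⟨i, hi⟩ := h x hx
    by_cases hij : i = j
    · subst hij
      rw [DirectSum.decompose_of_mem_same _ hi]; exact Submodule.subset_span hx
    · rw [DirectSum.decompose_of_mem_ne _ hi hij]; exact Submodule.zero_mem _
  | zero => simp
  | add x y _ _ hx hy => rw [DirectSum.decompose_add]; exact Submodule.add_mem _ hx hy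
  | smul c x _ hx => rw [DirectSum.decompose_smul]; exact Submodule.smul_mem _ _ hx

lemma rl_graded_sum {W : Submodule k M} (hW : Hg ℳ W) (X : Submodule k M) (s : Finset ℤ) :
    ∑ j ∈ s, rl W (X ⊓ ℳ j) ≤ rl W X := by
  classical
  have key : ∑ j ∈ s, rl W (X ⊓ ℳ j) ≤ rl W (X ⊓ ⨆ j ∈ s, ℳ j) := by
    induction s using Finset.induction_on with
    | empty => simp
    | insert a s ha ih =>
      rw [Finset.sum_insert ha, Finset.iSup_insert]
      rw [rl_add (le_sup_left : W ≤ W ⊔ ⨆ j ∈ s, ℳ j) (X ⊓ (ℳ a ⊔ ⨆ j ∈ s, ℳ j)), add_comm]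
      gcongr
      · refine ih.trans (rl_mono le_rfl ?_)
        refine le_sup_of_le_left (le_inf ?_ ?_)
        · exact inf_le_inf_left _ le_sup_right
        · exact inf_le_right.trans le_sup_right
      · refine le_trans (b := rl (W ⊔ ⨆ j ∈ s, ℳ j) (X ⊓ ℳ a)) ?_ ?_
        · have h := rl_eq (W := W ⊔ ⨆ j ∈ s, ℳ j) (X := X ⊓ ℳ a) (W' := W) LinearMap.id ?_
          · rw [Submodule.map_id] at h; exact h.le
          · rintro x ⟨-, hx⟩
            constructor
            · intro h
              obtain ⟨y, hy, z, hz, hyz⟩ := Submodule.mem_sup.1 h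
              have hza : (DirectSum.decompose ℳ z a : M) = 0 := by
                have : (⨆ j ∈ s, ℳ j) ≤ LinearMap.ker ((DirectSum.component k ℤ (fun i => ℳ i) a) ∘ₗ (DirectSum.decomposeLinearEquiv ℳ).toLinearMap) := by
                  refine iSup₂_le fun j hj x hx => ?_
                  have hja : j ≠ a := fun e => ha (e ▸ hj)
                  have := DirectSum.decompose_of_mem_ne ℳ hx hja
                  exact Subtype.ext this
                exact congrArg Subtype.val (LinearMap.mem_ker.1 (this hz))
              have := hW y hy a
              have e : (DirectSum.decompose ℳ x a : M) = x := DirectSum.decompose_of_mem_same _ hx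
              rw [← hyz, DirectSum.decompose_add] at e
              simp only [DirectSum.add_apply, Submodule.coe_add, hza, add_zero] at e
              rw [hyz] at e
              simpa [← e] using this
            · intro h; exact Submodule.mem_sup_left h
        · refine rl_mono le_rfl (le_sup_of_le_left (inf_le_inf_left _ le_sup_left))
  exact key.trans (rl_mono le_rfl (le_sup_of_le_left inf_le_left))

lemma rl_support_finite {W : Submodule k M} (hW : Hg ℳ W) {X : Submodule k M} (hf : rl W X ≠ ⊤) :
    {j | rl W (X ⊓ ℳ j) ≠ 0}.Finite := by
  by_contra hinf
  obtain ⟨N, hN⟩ := ENat.ne_top_iff_exists.1 hf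
  obtain ⟨s, hs, hc⟩ := Set.Infinite.exists_subset_card_eq hinf (N + 1)
  have := rl_graded_sum hW X s
  have h2 : ∑ j ∈ s, (1 : ℕ∞) ≤ ∑ j ∈ s, rl W (X ⊓ ℳ j) :=
    Finset.sum_le_sum fun j hj => ENat.one_le_iff_ne_zero.2 (hs hj)
  have h3 := h2.trans this
  rw [← hN] at h3
  simp only [Finset.sum_const, hc, nsmul_eq_mul, mul_one] at h3
  norm_cast at h3
  omega

variable (ℳ) in
/-- weighted graded dimension -/
def hs (w : ℤ → ℂ) (W X : Submodule k M) : ℂ := ∑' j, ((rl W (X ⊓ ℳ j)).toNat : ℂ) * w j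

lemma hs_summable (w : ℤ → ℂ) {W : Submodule k M} (hW : Hg ℳ W) {X : Submodule k M}
    (hf : rl W X ≠ ⊤) : Summable fun j => ((rl W (X ⊓ ℳ j)).toNat : ℂ) * w j := by
  apply summable_of_hasFiniteSupport
  refine (rl_support_finite hW hf).subset ?_
  intro j hj h0
  simp [h0] at hj

lemma rl_piece_ne_top {W X : Submodule k M} (hf : rl W X ≠ ⊤) (j : ℤ) : rl W (X ⊓ ℳ j) ≠ ⊤ :=
  ne_top_of_le_ne_top hf (rl_mono le_rfl (le_sup_of_le_left inf_le_left))

lemma hs_add (w : ℤ → ℂ) {W V X : Submodule k M} (hW : Hg ℳ W) (hWV : W ≤ V)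
    (hf : rl W X ≠ ⊤) : hs ℳ w W X = hs ℳ w W (X ⊓ V) + hs ℳ w V X := by
  have h1 : ∀ j, rl W (X ⊓ ℳ j) = rl W ((X ⊓ V) ⊓ ℳ j) + rl V (X ⊓ ℳ j) := by
    intro j
    rw [rl_add hWV (X ⊓ ℳ j), inf_right_comm]
  have hfin : rl W (X ⊓ V) ≠ ⊤ := ne_top_of_le_ne_top hf (rl_mono le_rfl (le_sup_of_le_left inf_le_left))
  unfold hs
  rw [← Summable.tsum_add]
  · congr 1; ext j
    have hj : rl W (X ⊓ ℳ j) ≠ ⊤ := rl_piece_ne_top hf j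
    rw [h1 j] at hj ⊢
    rw [ENat.toNat_add (by intro h; simp [h] at hj) (by intro h; simp [h] at hj)]
    push_cast; ring
  · exact hs_summable w hW hfin
  · apply summable_of_hasFiniteSupport
    refine (rl_support_finite hW hf).subset ?_
    intro j hj h0
    have : rl V (X ⊓ ℳ j) = 0 := by
      have := h1 j; rw [h0] at this; 
      exact (add_eq_zero.1 this.symm).2
    simp [this] at hj

lemma hs_norm (w : ℤ → ℂ) {W X : Submodule k M} (hW : Hg ℳ W) (hf : rl W X ≠ ⊤) {S : ℝ} (hS : 0 ≤ S)
    (hw : ∀ j, rl W (X ⊓ ℳ j) ≠ 0 → ‖w j‖ ≤ S) : ‖hs ℳ w W X‖ ≤ S * (rl W X).toNat := by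
  have hfin := rl_support_finite hW hf
  unfold hs
  rw [tsum_eq_sum (s := hfin.toFinset)]
  · refine (norm_sum_le _ _).trans ?_
    have h2 : ∑ j ∈ hfin.toFinset, ((rl W (X ⊓ ℳ j)).toNat : ℝ) ≤ (rl W X).toNat := by
      have := rl_graded_sum hW X hfin.toFinset
      have h3 := ENat.toNat_le_toNat this hf
      rw [ENat.toNat_sum (fun j _ => rl_piece_ne_top hf j)] at h3
      exact_mod_cast h3
    calc _ ≤ ∑ j ∈ hfin.toFinset, ((rl W (X ⊓ ℳ j)).toNat : ℝ) * S := by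
            refine Finset.sum_le_sum fun j hj => ?_
            rw [norm_mul]
            have := hw j (by simpa using hj)
            simp only [Complex.norm_natCast]
            gcongr
      _ = S * ∑ j ∈ hfin.toFinset, ((rl W (X ⊓ ℳ j)).toNat : ℝ) := by
            rw [← Finset.sum_mul, mul_comm]
      _ ≤ _ := by gcongr
  · intro j hj
    have : rl W (X ⊓ ℳ j) = 0 := by simpa using hj
    simp [this]

end graded
end FP
end

open Filter Complex
set_option maxHeartbeats 1000000
noncomputable section
namespace FP
section gradedmore
variable {k M : Type*} [Field k] [AddCommGroup M] [Module k M]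
  {ℳ : ℤ → Submodule k M} [DirectSum.Decomposition ℳ]

lemma mem_of_mem_sup {W : Submodule k M} (hW : Hg ℳ W) (s : Set ℤ) {j : ℤ} (hj : j ∉ s) {x : M}
    (hx : x ∈ ℳ j) (h : x ∈ W ⊔ ⨆ i ∈ s, ℳ i) : x ∈ W := by
  obtain ⟨y, hy, z, hz, hyz⟩ := Submodule.mem_sup.1 h
  have hza : (DirectSum.decompose ℳ z j : M) = 0 := by
    have : (⨆ i ∈ s, ℳ i) ≤ LinearMap.ker ((DirectSum.component k ℤ (fun i => ℳ i) j) ∘ₗ (DirectSum.decomposeLinearEquiv ℳ).toLinearMap) := by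
      refine iSup₂_le fun i hi x hx => ?_
      have hja : i ≠ j := fun e => hj (e ▸ hi)
      have := DirectSum.decompose_of_mem_ne ℳ hx hja
      exact Subtype.ext this
    exact congrArg Subtype.val (LinearMap.mem_ker.1 (this hz))
  have := hW y hy j
  have e : (DirectSum.decompose ℳ x j : M) = x := DirectSum.decompose_of_mem_same _ hx
  rw [← hyz, DirectSum.decompose_add] at e
  simp only [DirectSum.add_apply, Submodule.coe_add, hza, add_zero] at e
  rw [hyz] at e
  simpa [← e] using this

/-- pieces of a sup -/
lemma piece_sup {W N : Submodule k M} (hW : Hg ℳ W) (hN : Hg ℳ N) (j : ℤ) :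
    (N ⊔ W) ⊓ ℳ j ≤ (N ⊓ ℳ j) ⊔ W := by
  rintro x ⟨hx, hj⟩
  obtain ⟨y, hy, z, hz, rfl⟩ := Submodule.mem_sup.1 hx
  have e : (DirectSum.decompose ℳ (y + z) j : M) = y + z := DirectSum.decompose_of_mem_same _ hj
  rw [← e, DirectSum.decompose_add]
  exact Submodule.add_mem_sup ⟨hN y hy j, SetLike.coe_mem _⟩ (hW z hz j)

lemma hs_sup (w : ℤ → ℂ) {W N : Submodule k M} (hW : Hg ℳ W) (hN : Hg ℳ N) :
    hs ℳ w W (N ⊔ W) = hs ℳ w W N := by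
  unfold hs
  congr 1; ext j
  congr 3
  apply le_antisymm
  · exact rl_mono le_rfl (piece_sup hW hN j)
  · exact rl_mono le_rfl (le_sup_of_le_left (inf_le_inf_right _ le_sup_left))

lemma hs_congr_inf (w : ℤ → ℂ) {W W' N : Submodule k M} (h : ∀ x ∈ N, x ∈ W ↔ x ∈ W') :
    hs ℳ w W N = hs ℳ w W' N := by
  unfold hs
  congr 1; ext j
  have := rl_eq (X := N ⊓ ℳ j) (W := W) (W' := W') LinearMap.id (fun x hx => by simpa using h x hx.1)
  rw [Submodule.map_id] at this
  rw [this]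

end gradedmore

section sm
variable {B : Type*} [CommRing B]
/-- all primes above `c` have coheight `< d`. -/
def small (d : ℕ) (c : Ideal B) : Prop :=
  ∀ P : PrimeSpectrum B, c ≤ P.asIdeal → Order.coheight P < d

lemma small.mono {d : ℕ} {c c' : Ideal B} (h : small d c) (hc : c ≤ c') : small d c' :=
  fun P hP => h P (hc.trans hP)

lemma small.step {d : ℕ} {Q : PrimeSpectrum B} (hQ : Order.coheight Q < (d + 1 : ℕ)) {c : Ideal B}
    (hc : Q.asIdeal < c) : small d c := by
  intro P hP
  have hlt : Q < P := (show Q.asIdeal < P.asIdeal from lt_of_lt_of_le hc hP)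
  have h1 := Order.coheight_add_one_le hlt
  have h2 := lt_of_le_of_lt h1 hQ
  push_cast at h2
  by_contra h3
  push Not at h3
  have : (d : ℕ∞) + 1 ≤ Order.coheight P + 1 := by gcongr
  exact absurd h2 (not_lt.2 this)

lemma small.zero {c : Ideal B} (h : small 0 c) : c = ⊤ := by
  by_contra hc
  obtain ⟨m, hm, hcm⟩ := Ideal.exists_le_maximal c hc
  have := h ⟨m, hm.isPrime⟩ hcm
  simp at this

end sm

section B1
variable {k B M : Type*} [Field k] [CommRing B] [Algebra k B]
   [AddCommGroup M] [Module B M] [Module k M] [IsScalarTower k B M]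

/-- quantity `O(q^(d-1))`. -/
def Neg (q : ℕ → ℕ) (d : ℕ) (v : ℕ → ℕ∞) : Prop := ∃ K : ℕ, ∀ n, v n * q n ≤ K * (q n : ℕ∞) ^ d

variable {q : ℕ → ℕ} {d : ℕ}
lemma Neg.mono {v v' : ℕ → ℕ∞} (h : Neg q d v) (hv : ∀ n, v' n ≤ v n) : Neg q d v' := by
  obtain ⟨K, hK⟩ := h
  exact ⟨K, fun n => le_trans (by gcongr; exact hv n) (hK n)⟩

lemma Neg.add {v v' : ℕ → ℕ∞} (h : Neg q d v) (h' : Neg q d v') : Neg q d (fun n => v n + v' n) := by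
  obtain ⟨K, hK⟩ := h
  obtain ⟨K', hK'⟩ := h'
  refine ⟨K + K', fun n => ?_⟩
  rw [add_mul]; push_cast; rw [add_mul]
  exact add_le_add (hK n) (hK' n)

lemma Neg.zero : Neg q d (fun _ => 0) := ⟨0, fun n => by simp⟩

lemma Neg.sum {ι : Type*} (s : Finset ι) {v : ι → ℕ → ℕ∞} (h : ∀ i ∈ s, Neg q d (v i)) :
    Neg q d (fun n => ∑ i ∈ s, v i n) := by
  classical
  induction s using Finset.induction_on with
  | empty => simpa using Neg.zero
  | insert a s ha ih =>
    simp only [Finset.sum_insert ha]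
    exact (h a (by simp)).add (ih fun i hi => h i (by simp [hi]))

lemma Neg.ne_top (hq : ∀ n, 0 < q n) {v : ℕ → ℕ∞} (h : Neg q d v) (n : ℕ) : v n ≠ ⊤ := by
  obtain ⟨K, hK⟩ := h
  intro e
  have := hK n
  rw [e, ENat.top_mul (by exact_mod_cast (hq n).ne')] at this
  have h2 : (K : ℕ∞) * (q n : ℕ∞) ^ d = ((K * (q n) ^ d : ℕ) : ℕ∞) := by push_cast; rfl
  rw [h2] at this
  exact ENat.natCast_ne_top _ (top_le_iff.1 this)

lemma Neg.toNat (hq : ∀ n, 0 < q n) {v : ℕ → ℕ∞} (h : Neg q d v) :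
    (fun n => ((v n).toNat : ℝ)) =O[⊤] fun n => (q n : ℝ) ^ d / (q n : ℝ) := by
  have hn := h.ne_top hq
  obtain ⟨K, hK⟩ := h
  refine Asymptotics.IsBigO.of_bound K ?_
  rw [eventually_top]
  intro n
  have h1 := hK n
  rw [← ENat.natCast_toNat (hn n)] at h1
  norm_cast at h1
  have h3 : ((v n).toNat : ℝ) * q n ≤ K * (q n : ℝ) ^ d := by exact_mod_cast h1
  have hq' : (0 : ℝ) < q n := by exact_mod_cast hq n
  rw [Real.norm_of_nonneg (by positivity), Real.norm_of_nonneg (by positivity), ← mul_div_assoc,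
    le_div_iff₀ hq']
  exact h3

local notation "ρ" => Submodule.restrictScalars k

lemma rs_sup (U V : Submodule B M) : ρ (U ⊔ V) = ρ U ⊔ ρ V := by
  ext x; simp [Submodule.mem_sup]

/-- multiplication by an element of `M` as a `k`-linear map -/
def mulz (k : Type*) {B M : Type*} [Field k] [CommRing B] [Algebra k B]
   [AddCommGroup M] [Module B M] [Module k M] [IsScalarTower k B M] (z : M) : B →ₗ[k] M :=
  (LinearMap.toSpanSingleton B M z).restrictScalars k

@[simp] lemma mulz_apply (z : M) (b : B) : mulz k z b = b • z := rfl

lemma rl_cyc {𝔠 : Ideal B} {W : Submodule B M} {X : Submodule k M} (z : M) (h : ∀ b ∈ 𝔠, b • z ∈ W)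
    (hX : X ≤ ρ (B ∙ z ⊔ W)) : rl (ρ W) X ≤ rl (ρ 𝔠) ⊤ := by
  refine rl_le (mulz k z) (fun b _ hb => h b hb) (hX.trans ?_)
  rw [rs_sup]
  refine sup_le_sup_right ?_ _
  intro x hx
  obtain ⟨b, rfl⟩ := Submodule.mem_span_singleton.1 hx
  exact ⟨b, trivial, rfl⟩

/-- system of ideals -/
structure Sys (𝒜 : ℤ → Submodule k B) [GradedAlgebra 𝒜] where
  q : ℕ → ℕ
  qpos : ∀ n, 0 < q n
  J : ℕ → Ideal B
  Jh : ∀ n, (J n).IsHomogeneous 𝒜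
  s : Finset B
  deg : B → ℕ
  hdeg : ∀ f ∈ s, f ∈ 𝒜 (deg f)
  dpos : ∀ f ∈ s, 0 < deg f
  gen : Algebra.adjoin k (s : Set B) = ⊤
  a : ℕ
  ha : ∀ f ∈ s, ∀ n, f ^ (a * q n) ∈ J n

end B1
end FP
end

open Filter Complex
set_option maxHeartbeats 1000000
noncomputable section
namespace FP
section B1
variable {k B M : Type*} [Field k] [CommRing B] [Algebra k B]
   [AddCommGroup M] [Module B M] [Module k M] [IsScalarTower k B M]
   {𝒜 : ℤ → Submodule k B} [GradedAlgebra 𝒜]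

local notation "ρ" => Submodule.restrictScalars k

lemma Sys.noeth (S : Sys 𝒜) : IsNoetherianRing B := by
  have : Algebra.FiniteType k B := ⟨⟨S.s, S.gen⟩⟩
  exact Algebra.FiniteType.isNoetherianRing k B

lemma rl_pow (W : Ideal B) (x : B) (l : ℕ) :
    rl (ρ (Ideal.span {x ^ l} ⊔ W)) (⊤ : Submodule k B) ≤ l * rl (ρ (Ideal.span {x} ⊔ W)) ⊤ := by
  induction l with
  | zero =>
    rw [pow_zero, Ideal.span_singleton_one, top_sup_eq, Submodule.restrictScalars_top]
    simp [rl_zero_iff.2]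
  | succ l ih =>
    have hle : ρ (Ideal.span {x ^ (l+1)} ⊔ W) ≤ ρ (Ideal.span {x ^ l} ⊔ W) := by
      intro z hz
      refine (sup_le_sup_right ?_ W : Ideal.span {x ^ (l+1)} ⊔ W ≤ _) hz
      exact Ideal.span_singleton_le_span_singleton.2 (pow_dvd_pow _ (Nat.le_succ l))
    rw [rl_add hle]
    push_cast
    rw [add_mul, one_mul, add_comm]
    refine add_le_add ih ?_
    refine rl_cyc (x ^ l) ?_ ?_
    · intro b hb
      obtain ⟨y, hy, z, hz, rfl⟩ := Submodule.mem_sup.1 hb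
      rw [add_smul]
      refine Submodule.add_mem_sup ?_ ?_
      · obtain ⟨c, rfl⟩ := Ideal.mem_span_singleton'.1 hy
        refine Ideal.mem_span_singleton'.2 ⟨c, ?_⟩
        simp; ring
      · exact Ideal.mul_mem_right _ _ hz
    · intro z hz
      exact sup_le_sup_left (le_sup_right : W ≤ _) _ hz.2

lemma rl_one_le (S : Sys 𝒜) (Q : Ideal B) (h : ∀ f ∈ S.s, f ∈ Q) :
    rl (ρ Q) (⊤ : Submodule k B) ≤ 1 := by
  have h1 : (⊤ : Submodule k B) ≤ (⊤ : Submodule k k).map (Algebra.linearMap k B) ⊔ ρ Q := by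
    intro x _
    have hx : x ∈ Algebra.adjoin k (S.s : Set B) := by rw [S.gen]; trivial
    induction hx using Algebra.adjoin_induction with
    | mem x hx => exact Submodule.mem_sup_right (h x hx)
    | algebraMap r => exact Submodule.mem_sup_left ⟨r, trivial, rfl⟩
    | add x y _ _ hx hy => exact Submodule.add_mem _ (hx trivial) (hy trivial)
    | mul x y _ _ hx hy =>
      obtain ⟨_, ⟨c, -, rfl⟩, u, hu, rfl⟩ := Submodule.mem_sup.1 (hx trivial)
      obtain ⟨_, ⟨c', -, rfl⟩, v, hv, rfl⟩ := Submodule.mem_sup.1 (hy trivial)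
      rw [Submodule.restrictScalars_mem] at hu hv
      have : (Algebra.linearMap k B c + u) * (Algebra.linearMap k B c' + v) =
        Algebra.linearMap k B (c * c') + (u * (Algebra.linearMap k B c' + v) + Algebra.linearMap k B c * v) := by
        simp; ring
      rw [this]
      exact Submodule.add_mem_sup ⟨_, trivial, rfl⟩
        (Q.add_mem (Q.mul_mem_right _ hu) (Q.mul_mem_left _ hv))
  refine (rl_le (W := ⊥) (X := ⊤) (Algebra.linearMap k B) ?_ h1).trans ?_
  · intro x _ hx
    rw [Submodule.mem_bot] at hx; subst hx; simp
  · unfold rl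
    have : Module.length k k = 1 := by
      rw [Module.length_eq_rank]; simp
    rw [← this]
    refine (Module.length_le_of_injective _ (Submodule.injective_subtype _)).trans (Module.length_le_of_surjective (Submodule.mkQ ⊥) (Submodule.mkQ_surjective _))

theorem B1 (S : Sys 𝒜) (d : ℕ) : ∀ 𝔟 : Ideal B, small d 𝔟 →
    Neg S.q d (fun n => rl (ρ (𝔟 ⊔ S.J n)) (⊤ : Submodule k B)) := by
  have := S.noeth
  have triv : ∀ d, Neg S.q d (fun n => rl (ρ ((⊤ : Ideal B) ⊔ S.J n)) (⊤ : Submodule k B)) := by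
    intro d
    refine Neg.zero.mono fun n => ?_
    rw [top_sup_eq, rl_zero_iff.2]
    intro x _; trivial
  induction d with
  | zero =>
    intro 𝔟 h
    rw [h.zero]; exact triv 0
  | succ d ih =>
    intro 𝔟
    induction 𝔟 using IsNoetherian.induction with
    | hgt 𝔟 ih2 => ?_
    intro h𝔟
    by_cases htop : 𝔟 = ⊤
    · rw [htop]; exact triv _
    by_cases hpr : Ideal.IsPrime 𝔟
    · by_cases hall : ∀ f ∈ S.s, f ∈ 𝔟
      · refine ⟨1, fun n => ?_⟩
        have h1 : rl (ρ (𝔟 ⊔ S.J n)) (⊤ : Submodule k B) ≤ 1 :=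
          rl_one_le S _ fun f hf => Submodule.mem_sup_left (hall f hf)
        calc _ ≤ 1 * (S.q n : ℕ∞) := by gcongr
          _ ≤ _ := by
            rw [one_mul]; norm_cast; rw [one_mul]
            exact Nat.le_self_pow (by omega) _
      · push Not at hall
        obtain ⟨f, hf, hfQ⟩ := hall
        have hx : f ^ S.a ∉ 𝔟 := fun h => hfQ (hpr.mem_of_pow_mem _ h)
        have hlt : 𝔟 < 𝔟 ⊔ Ideal.span {f ^ S.a} := by
          refine lt_of_le_of_ne le_sup_left fun e => hx ?_
          rw [e]; exact Submodule.mem_sup_right (Ideal.mem_span_singleton_self _)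
        have hsm : small d (𝔟 ⊔ Ideal.span {f ^ S.a}) :=
          small.step (Q := ⟨𝔟, hpr⟩) (h𝔟 ⟨𝔟, hpr⟩ le_rfl) hlt
        obtain ⟨K, hK⟩ := ih _ hsm
        refine ⟨K, fun n => ?_⟩
        have h1 := rl_pow (k := k) (𝔟 ⊔ S.J n) (f ^ S.a) (S.q n)
        rw [← pow_mul] at h1
        have h2 : Ideal.span {f ^ (S.a * S.q n)} ⊔ (𝔟 ⊔ S.J n) = 𝔟 ⊔ S.J n := by
          rw [sup_eq_right, Ideal.span_singleton_le_iff_mem]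
          exact Submodule.mem_sup_right (S.ha f hf n)
        have h3 : Ideal.span {f ^ S.a} ⊔ (𝔟 ⊔ S.J n) = 𝔟 ⊔ Ideal.span {f ^ S.a} ⊔ S.J n := by
          rw [← sup_assoc, sup_comm 𝔟]
        rw [h2, h3] at h1
        calc _ ≤ (S.q n * rl (ρ (𝔟 ⊔ Ideal.span {f ^ S.a} ⊔ S.J n)) (⊤ : Submodule k B)) * S.q n := by
              gcongr
          _ = S.q n * (rl (ρ (𝔟 ⊔ Ideal.span {f ^ S.a} ⊔ S.J n)) (⊤ : Submodule k B) * S.q n) := by ring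
          _ ≤ S.q n * (K * (S.q n : ℕ∞) ^ d) := by exact mul_le_mul_right (hK n) _
          _ = _ := by ring
    · rw [Ideal.not_isPrime_iff] at hpr
      obtain ⟨x, hx, y, hy, hxy⟩ := hpr.resolve_left htop
      have hlt : ∀ z, z ∉ 𝔟 → 𝔟 < 𝔟 ⊔ Ideal.span {z} := fun z hz => by
        refine lt_of_le_of_ne le_sup_left fun e => hz ?_
        rw [e]; exact Submodule.mem_sup_right (Ideal.mem_span_singleton_self _)
      refine ((ih2 _ (hlt x hx) (h𝔟.mono (hlt x hx).le)).add (ih2 _ (hlt y hy) (h𝔟.mono (hlt y hy).le))).mono ?_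
      intro n
      have hle : ρ (𝔟 ⊔ S.J n) ≤ ρ (𝔟 ⊔ Ideal.span {x} ⊔ S.J n) :=
        (sup_le_sup_right le_sup_left _ : 𝔟 ⊔ S.J n ≤ 𝔟 ⊔ Ideal.span {x} ⊔ S.J n)
      rw [rl_add hle, add_comm]
      refine add_le_add le_rfl ?_
      refine rl_cyc x ?_ ?_
      · intro b hb
        have : 𝔟 ⊔ Ideal.span {y} ⊔ S.J n ≤ (𝔟 ⊔ S.J n).colon {x} := by
          refine sup_le (sup_le ?_ ?_) ?_
          · intro z hz; rw [Submodule.mem_colon_singleton]; exact Submodule.mem_sup_left (Ideal.mul_mem_right _ _ hz)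
          · rw [Ideal.span_singleton_le_iff_mem, Submodule.mem_colon_singleton]
            exact Submodule.mem_sup_left (by simpa [mul_comm] using hxy)
          · intro z hz; rw [Submodule.mem_colon_singleton]; exact Submodule.mem_sup_right (Ideal.mul_mem_right _ _ hz)
        exact Submodule.mem_colon_singleton.1 (this hb)
      · intro z hz
        have : 𝔟 ⊔ Ideal.span {x} ⊔ S.J n ≤ Ideal.span {x} ⊔ (𝔟 ⊔ S.J n) := by
          rw [← sup_assoc, sup_comm 𝔟]
        exact this hz.2

lemma B1mod (S : Sys 𝒜) {d : ℕ} {𝔟 : Ideal B} (h : small d 𝔟) {U X : Submodule B M} (hX : X.FG)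
    (hU : ∀ b ∈ 𝔟, ∀ x ∈ X, b • x ∈ U) :
    Neg S.q d (fun n => rl (ρ (U ⊔ S.J n • X)) (ρ X)) := by
  obtain ⟨s, hs⟩ := hX
  refine (Neg.sum s (v := fun _ n => rl (ρ (𝔟 ⊔ S.J n)) ⊤) fun _ _ => B1 S d 𝔟 h).mono fun n => ?_
  have hX : ρ X = ⨆ m ∈ s, ρ (B ∙ m) := by
    apply le_antisymm
    · intro x hx
      have hx' : x ∈ X := hx
      rw [← hs] at hx'
      rw [Submodule.mem_span_finset] at hx'
      obtain ⟨f, -, rfl⟩ := hx'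
      refine Submodule.sum_mem _ fun m hm => ?_
      refine (le_iSup₂_of_le (f := fun m (_ : m ∈ s) => ρ (B ∙ m)) m hm le_rfl) ?_
      exact Submodule.smul_mem _ _ (Submodule.mem_span_singleton_self _)
    · refine iSup₂_le fun m hm => ?_
      refine (show B ∙ m ≤ X from ?_)
      rw [Submodule.span_singleton_le_iff_mem, ← hs]
      exact Submodule.subset_span hm
  rw [hX]
  refine (rl_sum_le s _ _).trans (Finset.sum_le_sum fun m hm => ?_)
  have hmX : m ∈ X := by rw [← hs]; exact Submodule.subset_span hm
  refine rl_cyc m ?_ (le_sup_left : B ∙ m ≤ B ∙ m ⊔ _)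
  intro b hb
  obtain ⟨y, hy, z, hz, rfl⟩ := Submodule.mem_sup.1 hb
  rw [add_smul]
  exact Submodule.add_mem_sup (hU y hy m hmX) (Submodule.smul_mem_smul hz hmX)

end B1
end FP
end

open Filter Complex
set_option maxHeartbeats 1000000
set_option linter.unusedSectionVars false
set_option linter.unusedVariables false
noncomputable section
namespace FP
section GM
variable {k B M : Type*} [Field k] [CommRing B] [Algebra k B]
   [AddCommGroup M] [Module B M] [Module k M] [IsScalarTower k B M]
   {𝒜 : ℤ → Submodule k B} [GradedAlgebra 𝒜]
   {ℳ : ℤ → Submodule k M} [DirectSum.Decomposition ℳ]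

local notation "ρ" => Submodule.restrictScalars k

/-- graded module condition -/
def GrM (𝒜 : ℤ → Submodule k B) (ℳ : ℤ → Submodule k M) : Prop :=
  ∀ (a b : ℤ), ∀ r ∈ 𝒜 a, ∀ x ∈ ℳ b, r • x ∈ ℳ (a + b)

lemma GrM.self : GrM 𝒜 𝒜 := fun _ _ _ hr _ hx => SetLike.mul_mem_graded hr hx

lemma dec_smul (hℳ : GrM 𝒜 ℳ) {t : ℤ} {m : M} (hm : m ∈ ℳ t) (b : B) (i : ℤ) :
    (DirectSum.decompose ℳ (b • m) (i + t) : M) = (DirectSum.decompose 𝒜 b i : B) • m := by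
  induction b using DirectSum.Decomposition.inductionOn 𝒜 with
  | zero => simp
  | @homogeneous l b =>
    have h1 : (b : B) • m ∈ ℳ (l + t) := hℳ _ _ _ b.2 _ hm
    by_cases h : l = i
    · subst h
      rw [DirectSum.decompose_of_mem_same _ h1, DirectSum.decompose_of_mem_same _ b.2]
    · rw [DirectSum.decompose_of_mem_ne _ h1 (by omega), DirectSum.decompose_of_mem_ne _ b.2 h, zero_smul]
  | add a b ha hb =>
    rw [add_smul, DirectSum.decompose_add, DirectSum.decompose_add]
    simp only [DirectSum.add_apply, Submodule.coe_add, ha, hb, add_smul]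

lemma Hg.ideal {J : Ideal B} (h : J.IsHomogeneous 𝒜) : Hg 𝒜 (ρ J) := fun x hx j => h j hx
lemma Hg.toIdeal {J : Ideal B} (h : Hg 𝒜 (ρ J)) : J.IsHomogeneous 𝒜 := fun j x hx => h x hx j

lemma Hg.colon (hℳ : GrM 𝒜 ℳ) {N : Submodule B M} (hN : Hg ℳ (ρ N)) {t : ℤ} {m : M} (hm : m ∈ ℳ t) :
    (N.colon {m}).IsHomogeneous 𝒜 := by
  intro i b hb
  rw [Submodule.mem_colon_singleton] at hb ⊢
  rw [← dec_smul hℳ hm]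
  exact hN _ hb _

open Classical in
lemma dec_smul_sum (hℳ : GrM 𝒜 ℳ) (b : B) (x : M) (j : ℤ) :
    (DirectSum.decompose ℳ (b • x) j : M) = ∑ i ∈ DFinsupp.support (DirectSum.decompose ℳ x),
      (DirectSum.decompose 𝒜 b (j - i) : B) • (DirectSum.decompose ℳ x i : M) := by
  conv_lhs => rw [← DirectSum.sum_support_decompose ℳ x, Finset.smul_sum, DirectSum.decompose_sum]
  rw [DFinsupp.finsetSum_apply, AddSubmonoidClass.coe_finsetSum]
  refine Finset.sum_congr rfl fun i _ => ?_
  rw [← dec_smul hℳ (SetLike.coe_mem _), sub_add_cancel]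

lemma Hg.spanB (hℳ : GrM 𝒜 ℳ) {s : Set M} (h : ∀ x ∈ s, ∃ j, x ∈ ℳ j) :
    Hg ℳ (ρ (Submodule.span B s)) := by
  intro x hx j
  change x ∈ Submodule.span B s at hx
  rw [Submodule.restrictScalars_mem]
  induction hx using Submodule.span_induction generalizing j with
  | mem x hx =>
    obtain ⟨i, hi⟩ := h x hx
    by_cases hij : i = j
    · subst hij
      rw [DirectSum.decompose_of_mem_same _ hi]; exact Submodule.subset_span hx
    · rw [DirectSum.decompose_of_mem_ne _ hi hij]; exact Submodule.zero_mem _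
  | zero => simp
  | add x y _ _ hx hy => rw [DirectSum.decompose_add]; exact Submodule.add_mem _ (hx j) (hy j)
  | smul c x hx' hx =>
    rw [dec_smul_sum hℳ]
    exact Submodule.sum_mem _ fun i _ => Submodule.smul_mem _ _ (hx i)

lemma Hg.sing (hℳ : GrM 𝒜 ℳ) {t : ℤ} {m : M} (hm : m ∈ ℳ t) : Hg ℳ (ρ (B ∙ m)) :=
  Hg.spanB hℳ (by rintro _ rfl; exact ⟨t, hm⟩)

lemma Hg.smul (hℳ : GrM 𝒜 ℳ) {J : Ideal B} (hJ : J.IsHomogeneous 𝒜) {X : Submodule B M}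
    (hX : Hg ℳ (ρ X)) : Hg ℳ (ρ (J • X)) := by
  intro x hx j
  change x ∈ J • X at hx
  rw [Submodule.restrictScalars_mem]
  induction hx using Submodule.smul_induction_on' with
  | smul b hb x hx =>
    rw [dec_smul_sum hℳ]
    exact Submodule.sum_mem _ fun i _ => Submodule.smul_mem_smul (hJ _ hb) (hX x hx i)
  | add x _ y _ hx hy => rw [DirectSum.decompose_add]; exact Submodule.add_mem _ hx hy

lemma Hg.supB {N N' : Submodule B M} (h : Hg ℳ (ρ N)) (h' : Hg ℳ (ρ N')) : Hg ℳ (ρ (N ⊔ N')) := by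
  rw [rs_sup]; exact h.sup h'

theorem FI [IsNoetherian B M] [IsNoetherianRing B] (hℳ : GrM 𝒜 ℳ) {N0 X : Submodule B M} (h0 : Hg ℳ (ρ N0)) (hX : Hg ℳ (ρ X))
    (hle : N0 ≤ X) (p : Submodule B M → Prop) (hp0 : p N0)
    (step : ∀ (N : Submodule B M) (m : M) (t : ℤ), Hg ℳ (ρ N) → N0 ≤ N → N ≤ X → m ∈ X → m ∈ ℳ t →
      (N.colon {m}).IsPrime → p N → p (N ⊔ B ∙ m)) : p X := by
  obtain ⟨N, ⟨hN, h0N, hNX, hp⟩, hmax⟩ := set_has_maximal_iff_noetherian.2 (inferInstanceAs (IsNoetherian B M))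
    {N | Hg ℳ (ρ N) ∧ N0 ≤ N ∧ N ≤ X ∧ p N} ⟨N0, h0, le_rfl, hle, hp0⟩
  by_cases hXN : X ≤ N
  · rwa [le_antisymm hXN hNX]
  exfalso
  have : ∃ m, m ∈ X ∧ m ∉ N ∧ ∃ t, m ∈ ℳ t := by
    by_contra hcon
    push Not at hcon
    exact hXN (show ρ X ≤ ρ N from hX.le fun j x hx hj => by
      by_contra hx'; exact hcon x hx hx' j hj)
  obtain ⟨m0, hm0⟩ := this
  obtain ⟨Q, ⟨m, ⟨hmX, hmN, t, hmt⟩, rfl⟩, hQ⟩ := set_has_maximal_iff_noetherian.2 (inferInstanceAs (IsNoetherian B B))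
    {Q | ∃ m, (m ∈ X ∧ m ∉ N ∧ ∃ t, m ∈ ℳ t) ∧ Q = N.colon {m}} ⟨_, m0, hm0, rfl⟩
  have hpr : (N.colon {m}).IsPrime := by
    refine (Hg.colon hℳ hN hmt).isPrime_of_homogeneous_mem_or_mem ?_ ?_
    · intro e
      have : (1 : B) ∈ N.colon {m} := by rw [e]; trivial
      rw [Submodule.mem_colon_singleton, one_smul] at this
      exact hmN this
    · rintro a b ⟨i, ha⟩ ⟨l, hb⟩ hab
      by_contra hcon
      push Not at hcon
      obtain ⟨h1, h2⟩ := hcon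
      rw [Submodule.mem_colon_singleton] at h2 hab
      refine hQ (N.colon {b • m}) ⟨b • m, ⟨X.smul_mem _ hmX, h2, l + t, hℳ _ _ _ hb _ hmt⟩, rfl⟩ ?_
      refine lt_of_le_of_ne ?_ ?_
      · intro z hz
        rw [Submodule.mem_colon_singleton] at hz ⊢
        rw [smul_comm]; exact N.smul_mem _ hz
      · intro e
        apply h1
        rw [e, Submodule.mem_colon_singleton, smul_smul]
        exact hab
  refine hmax (N ⊔ B ∙ m) ⟨hN.supB (Hg.sing hℳ hmt), h0N.trans le_sup_left, sup_le hNX ?_, ?_⟩ ?_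
  · rwa [Submodule.span_singleton_le_iff_mem]
  · exact step N m t hN h0N hNX hmX hmt hpr hp
  · refine lt_of_le_of_ne le_sup_left fun e => hmN ?_
    rw [e]; exact Submodule.mem_sup_right (Submodule.mem_span_singleton_self _)

lemma Sys.deg_bound (S : Sys 𝒜) : ∃ c : ℕ, ∀ n j, ∀ x ∈ 𝒜 j, ¬ (0 ≤ j ∧ j ≤ c * S.q n) → x ∈ S.J n := by
  classical
  refine ⟨S.a * ∑ f ∈ S.s, S.deg f, fun n j x hx hj => ?_⟩
  set c := S.a * ∑ f ∈ S.s, S.deg f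
  refine mem_of_mem_sup (Hg.ideal (S.Jh n)) {j | 0 ≤ j ∧ j ≤ c * S.q n} hj hx ?_
  have : x ∈ Submodule.span k (Submonoid.closure (S.s : Set B) : Set B) := by
    rw [← Algebra.adjoin_eq_span, S.gen]; trivial
  refine Submodule.span_le.2 ?_ this
  rintro z hz
  obtain ⟨f, -, rfl⟩ := Submonoid.mem_closure_finset.1 hz
  by_cases h : ∃ b ∈ S.s, S.a * S.q n ≤ f b
  · obtain ⟨b, hb, hle⟩ := h
    apply Submodule.mem_sup_left
    rw [Submodule.restrictScalars_mem, ← Finset.mul_prod_erase _ _ hb]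
    exact Ideal.mul_mem_right _ _ (Ideal.mem_of_dvd _ (pow_dvd_pow _ hle) (S.ha b hb n))
  · push Not at h
    apply Submodule.mem_sup_right
    have hm := SetLike.prod_pow_mem_graded 𝒜 (fun b => (S.deg b : ℤ)) id (F := S.s) f (fun b hb => S.hdeg b hb)
    refine (le_iSup₂_of_le (f := fun i (_ : i ∈ {j : ℤ | 0 ≤ j ∧ j ≤ c * S.q n}) => 𝒜 i) _ ?_ le_rfl) hm
    constructor
    · exact Finset.sum_nonneg fun i _ => by positivity
    · have : ∑ b ∈ S.s, f b • (S.deg b) ≤ c * S.q n := by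
        calc _ ≤ ∑ b ∈ S.s, (S.a * S.q n) * S.deg b := by
              refine Finset.sum_le_sum fun b hb => ?_
              rw [smul_eq_mul]; gcongr; exact (h b hb).le
          _ = _ := by rw [← Finset.mul_sum]; simp only [c]; ring
      simp only [smul_eq_mul, nsmul_eq_mul, id] at this ⊢
      exact_mod_cast this

lemma Hg.gens (hℳ : GrM 𝒜 ℳ) {X : Submodule B M} (hX : Hg ℳ (ρ X)) (hfg : X.FG) :
    ∃ s : Finset M, (∀ x ∈ s, ∃ j, x ∈ ℳ j) ∧ Submodule.span B (s : Set M) = X := by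
  classical
  obtain ⟨s, hs⟩ := hfg
  refine ⟨s.biUnion fun x => (DFinsupp.support (DirectSum.decompose ℳ x)).image
    fun i => (DirectSum.decompose ℳ x i : M), ?_, ?_⟩
  · intro x hx
    simp only [Finset.mem_biUnion, Finset.mem_image] at hx
    obtain ⟨y, hy, i, -, rfl⟩ := hx
    exact ⟨i, SetLike.coe_mem _⟩
  · apply le_antisymm
    · rw [Submodule.span_le]
      intro x hx
      simp only [Finset.coe_biUnion, Set.mem_iUnion, Finset.coe_image, Set.mem_image] at hx
      obtain ⟨y, hy, i, -, rfl⟩ := hx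
      exact hX y (by rw [Submodule.restrictScalars_mem, ← hs]; exact Submodule.subset_span hy) i
    · rw [← hs, Submodule.span_le]
      intro x hx
      change x ∈ Submodule.span B _
      rw [← DirectSum.sum_support_decompose ℳ x]
      refine Submodule.sum_mem _ fun i hi => Submodule.subset_span ?_
      simp only [Finset.coe_biUnion, Set.mem_iUnion, Finset.coe_image, Set.mem_image]
      exact ⟨x, hx, i, hi, rfl⟩

lemma Sys.deg_bound_mod (S : Sys 𝒜) (hℳ : GrM 𝒜 ℳ) {X : Submodule B M} (hX : Hg ℳ (ρ X)) (hfg : X.FG) :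
    ∃ T : ℕ, ∀ n j, ∀ x ∈ X, x ∈ ℳ j → ¬ (|j| ≤ T * S.q n) → x ∈ S.J n • X := by
  classical
  obtain ⟨c, hc⟩ := S.deg_bound
  obtain ⟨s, hs, rfl⟩ := Hg.gens hℳ hX hfg
  choose! t ht using hs
  refine ⟨c + ∑ m ∈ s, (t m).natAbs, fun n j x hx hj hT => ?_⟩
  obtain ⟨f, -, rfl⟩ := Submodule.mem_span_finset.1 hx
  rw [← DirectSum.decompose_of_mem_same _ hj, DirectSum.decompose_sum, DFinsupp.finsetSum_apply,
    AddSubmonoidClass.coe_finsetSum]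
  refine Submodule.sum_mem _ fun m hm => ?_
  rw [← sub_add_cancel j (t m), dec_smul hℳ (ht m hm)]
  refine Submodule.smul_mem_smul (hc n (j - t m) _ (SetLike.coe_mem _) ?_) (Submodule.subset_span hm)
  intro hcon
  apply hT
  have h1 : (t m).natAbs ≤ ∑ m ∈ s, (t m).natAbs := Finset.single_le_sum (f := fun m => (t m).natAbs) (fun _ _ => Nat.zero_le _) hm
  have h2 : |t m| ≤ ((∑ m ∈ s, (t m).natAbs : ℕ) : ℤ) := by
    rw [Int.abs_eq_natAbs]; exact_mod_cast h1
  have h3 : (1 : ℤ) ≤ S.q n := by exact_mod_cast S.qpos n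
  have h4 : |j| ≤ |j - t m| + |t m| := by
    have := abs_add_le (j - t m) (t m); simpa using this
  have h5 : |j - t m| ≤ c * S.q n := by rw [abs_of_nonneg hcon.1]; exact hcon.2
  push_cast at h2 ⊢
  nlinarith [abs_nonneg (t m)]

end GM
end FP
end

open Filter Complex
set_option maxHeartbeats 1000000
set_option linter.unusedSectionVars false
set_option linter.unusedVariables false
noncomputable section
namespace FP
/-- weights -/
def wt (y : ℂ) (q : ℕ) (j : ℤ) : ℂ := Complex.exp (-Complex.I * y * (j : ℂ) / (q : ℂ))

lemma wt_add (y : ℂ) (q : ℕ) (i j : ℤ) : wt y q (i + j) = wt y q i * wt y q j := by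
  unfold wt
  rw [← Complex.exp_add]; congr 1; push_cast; ring

lemma norm_arg (y : ℂ) (q : ℕ) (j : ℤ) :
    ‖-Complex.I * y * (j : ℂ) / (q : ℂ)‖ = ‖y‖ * |(j : ℝ)| / q := by
  simp

lemma wt_norm (y : ℂ) {q : ℕ} (hq : 0 < q) {j : ℤ} {T : ℕ} (h : |j| ≤ T * q) :
    ‖wt y q j‖ ≤ Real.exp (‖y‖ * T) := by
  unfold wt
  refine (Complex.norm_exp_le_exp_norm _).trans ?_
  rw [Real.exp_le_exp, norm_arg]
  have hq' : (0 : ℝ) < q := by exact_mod_cast hq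
  rw [div_le_iff₀ hq', mul_assoc]
  gcongr
  exact_mod_cast h

lemma wt_sub_one (y : ℂ) {q : ℕ} (hq : 0 < q) (t : ℤ) :
    ‖wt y q t - 1‖ ≤ (‖y‖ * |(t : ℝ)|) * Real.exp (‖y‖ * |(t : ℝ)|) / q := by
  unfold wt
  have h1 := Complex.norm_exp_sub_sum_le_norm_mul_exp (-Complex.I * y * (t : ℂ) / (q : ℂ)) 1
  simp only [Finset.range_one, Finset.sum_singleton, pow_zero, Nat.factorial_zero, Nat.cast_one, div_one, pow_one] at h1
  refine h1.trans ?_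
  rw [norm_arg]
  have hq' : (1 : ℝ) ≤ q := by exact_mod_cast hq
  rw [div_mul_eq_mul_div]
  gcongr
  exact div_le_self (by positivity) hq'

section GM
variable {k B M : Type*} [Field k] [CommRing B] [Algebra k B]
   [AddCommGroup M] [Module B M] [Module k M] [IsScalarTower k B M]
   {𝒜 : ℤ → Submodule k B} [GradedAlgebra 𝒜]
   {ℳ : ℤ → Submodule k M} [DirectSum.Decomposition ℳ]

local notation "ρ" => Submodule.restrictScalars k

/-- negligible complex sequences -/
def App (q : ℕ → ℕ) (d : ℕ) (f : ℕ → ℂ) : Prop :=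
  f =O[⊤] fun n => (q n : ℝ) ^ d / (q n : ℝ)

lemma App.add {q : ℕ → ℕ} {d : ℕ} {f g : ℕ → ℂ} (hf : App q d f) (hg : App q d g) :
    App q d (fun n => f n + g n) := Asymptotics.IsBigO.add hf hg
lemma App.sub {q : ℕ → ℕ} {d : ℕ} {f g : ℕ → ℂ} (hf : App q d f) (hg : App q d g) :
    App q d (fun n => f n - g n) := Asymptotics.IsBigO.sub hf hg
lemma App.congr {q : ℕ → ℕ} {d : ℕ} {f g : ℕ → ℂ} (hf : App q d f) (h : ∀ n, g n = f n) :
    App q d g := by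
  have : g = f := funext h
  rwa [this]
lemma App.cmul {q : ℕ → ℕ} {d : ℕ} {f : ℕ → ℂ} (hf : App q d f) (c : ℂ) :
    App q d (fun n => c * f n) := Asymptotics.IsBigO.const_mul_left hf c
lemma App.zero {q : ℕ → ℕ} {d : ℕ} : App q d (fun _ => 0) := Asymptotics.isBigO_zero _ _

lemma hs_App (S : Sys 𝒜) (y : ℂ) (hℳ : GrM 𝒜 ℳ) {d : ℕ} {X : Submodule B M} (hX : Hg ℳ (ρ X)) (hfg : X.FG)
    {W Y : ℕ → Submodule k M} (hW : ∀ n, Hg ℳ (W n)) (hY : ∀ n, Y n ≤ ρ X)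
    (hJ : ∀ n, ρ (S.J n • X) ≤ W n) (hN : Neg S.q d fun n => rl (W n) (Y n)) :
    App S.q d fun n => hs ℳ (wt y (S.q n)) (W n) (Y n) := by
  obtain ⟨T, hT⟩ := S.deg_bound_mod hℳ hX hfg
  have h1 := (hN.toNat S.qpos).const_mul_left (Real.exp (‖y‖ * T))
  refine Asymptotics.IsBigO.trans ?_ h1
  refine Asymptotics.IsBigO.of_bound 1 ?_
  rw [eventually_top]
  intro n
  rw [one_mul, Real.norm_of_nonneg (by positivity)]
  refine hs_norm _ (hW n) (hN.ne_top S.qpos n) (Real.exp_pos _).le ?_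
  intro j hj
  refine wt_norm y (S.qpos n) ?_
  by_contra hcon
  apply hj
  rw [rl_zero_iff]
  rintro x ⟨hx, hxj⟩
  exact hJ n (hT n j x (hY n hx) hxj hcon)

/-- weighted Hilbert sum of `X/U` modulo `J` -/
def hh (S : Sys 𝒜) (y : ℂ) (ℳ : ℤ → Submodule k M) (U X : Submodule B M) (n : ℕ) : ℂ :=
  hs ℳ (wt y (S.q n)) (ρ (U ⊔ S.J n • X)) (ρ X)

/-- weighted Hilbert sum of `B/Q` -/
def hB (S : Sys 𝒜) (y : ℂ) (Q : Ideal B) (n : ℕ) : ℂ :=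
  hs 𝒜 (wt y (S.q n)) (ρ (Q ⊔ S.J n)) ⊤

lemma hB_App (S : Sys 𝒜) (y : ℂ) {d : ℕ} {Q : Ideal B} (hQh : Q.IsHomogeneous 𝒜) (hQ : small d Q) :
    App S.q d (hB S y Q) := by
  refine hs_App S y GrM.self (X := (⊤ : Ideal B)) Hg.top ⟨{1}, by simp⟩ (fun n => ?_) (fun n => ?_) (fun n => ?_) (B1 S d Q hQ)
  · exact (Hg.ideal hQh).supB (Hg.ideal (S.Jh n))
  · exact le_rfl
  · have : S.J n • (⊤ : Ideal B) ≤ Q ⊔ S.J n := by rw [smul_eq_mul, Ideal.mul_top]; exact le_sup_right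
    exact this

lemma exists_avoid [IsNoetherianRing B] {d : ℕ} {𝔞 𝔟 : Ideal B} (ha : small (d + 1) 𝔞) (hb : small d 𝔟) :
    ∃ s ∈ 𝔟, small d (𝔞 ⊔ Ideal.span {s}) := by
  classical
  have hfin := 𝔞.finite_minimalPrimes_of_isNoetherianRing
  let F := hfin.toFinset.filter fun P => ¬ 𝔟 ≤ P
  have h1 : ¬ ((𝔟 : Set B) ⊆ ⋃ P ∈ (F : Set (Ideal B)), P) := by
    rw [Ideal.subset_union_prime (f := fun P => P) ⊥ ⊥ (by
      intro i hi _ _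
      have := (Finset.mem_filter.1 hi).1
      exact (hfin.mem_toFinset.1 this).1.1)]
    rintro ⟨P, hP, hP'⟩
    exact (Finset.mem_filter.1 hP).2 hP'
  obtain ⟨s, hs, hs'⟩ := Set.not_subset.1 h1
  refine ⟨s, hs, fun P hP => ?_⟩
  have := P.2
  obtain ⟨P0, hP0, hle⟩ := Ideal.exists_minimalPrimes_le (le_sup_left.trans hP)
  have hpr := hP0.1.1
  by_cases hbP : 𝔟 ≤ P0
  · exact hb P (hbP.trans hle)
  · have hsP0 : s ∉ P0 := by
      intro h
      apply hs'
      simp only [Set.mem_iUnion]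
      exact ⟨P0, Finset.mem_coe.2 (Finset.mem_filter.2 ⟨hfin.mem_toFinset.2 hP0, hbP⟩), h⟩
    have hsP : s ∈ P.asIdeal := hP (Submodule.mem_sup_right (Ideal.mem_span_singleton_self _))
    exact small.step (Q := ⟨P0, hpr⟩) (ha ⟨P0, hpr⟩ hP0.1.2)
      (lt_of_le_of_ne hle fun e => hsP0 (by change P0 = P.asIdeal at e; rw [e]; exact hsP)) P le_rfl

lemma rs_mono {U V : Submodule B M} (h : U ≤ V) : ρ U ≤ ρ V := h

theorem lemT (S : Sys 𝒜) (y : ℂ) [IsNoetherian B M] (hℳ : GrM 𝒜 ℳ) {d : ℕ} {𝔞 𝔟 : Ideal B}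
    (ha : small (d + 1) 𝔞) (hb : small d 𝔟) {U N1 N' : Submodule B M} (hU : Hg ℳ (ρ U))
    (hN1 : Hg ℳ (ρ N1)) (hN' : Hg ℳ (ρ N')) (h1 : U ≤ N1) (h2 : N1 ≤ N')
    (hbN : ∀ b ∈ 𝔟, ∀ x ∈ N', b • x ∈ N1) (haN : ∀ b ∈ 𝔞, ∀ x ∈ N', b • x ∈ U) :
    App S.q d fun n => hh S y ℳ U N' n - hh S y ℳ U N1 n := by
  have := S.noeth
  obtain ⟨s, hs, hsm⟩ := exists_avoid ha hb
  have hfg : ∀ X : Submodule B M, X.FG := fun X => IsNoetherian.noetherian X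
  -- finite lengths
  have fin' : ∀ n, rl (ρ (U ⊔ S.J n • N')) (ρ N') ≠ ⊤ := (B1mod S ha (hfg N') haN).ne_top S.qpos
  have fin1 : ∀ n, rl (ρ (U ⊔ S.J n • N1)) (ρ N1) ≠ ⊤ :=
    (B1mod S ha (hfg N1) fun b hb x hx => haN b hb x (h2 hx)).ne_top S.qpos
  have hW1 : ∀ n, Hg ℳ (ρ (U ⊔ S.J n • N1)) := fun n => hU.supB (Hg.smul hℳ (S.Jh n) hN1)
  have hW' : ∀ n, Hg ℳ (ρ (U ⊔ S.J n • N')) := fun n => hU.supB (Hg.smul hℳ (S.Jh n) hN')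
  have hWle : ∀ n, ρ (U ⊔ S.J n • N1) ≤ ρ (U ⊔ S.J n • N') := fun n =>
    rs_mono (sup_le_sup_left (Submodule.smul_mono le_rfl h2) _)
  have hUN : ∀ n, ρ (U ⊔ S.J n • N') ≤ ρ N' := fun n =>
    rs_mono (sup_le (h1.trans h2) Submodule.smul_le_right)
  have e1 : ∀ n, ρ N1 ⊔ ρ (U ⊔ S.J n • N') = ρ (N1 ⊔ S.J n • N') := by
    intro n
    rw [← rs_sup]; congr 1
    rw [← sup_assoc, sup_eq_left.2 h1]
  have e2 : ∀ n, ρ N' ⊓ ρ (N1 ⊔ S.J n • N') = ρ N1 ⊔ ρ (U ⊔ S.J n • N') := by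
    intro n
    rw [e1, inf_eq_right]
    exact rs_mono (sup_le h2 Submodule.smul_le_right)
  have hle2 : ∀ n, ρ (U ⊔ S.J n • N') ≤ ρ (N1 ⊔ S.J n • N') := fun n => rs_mono (sup_le_sup_right h1 _)
  -- coker
  have hc : Neg S.q d fun n => rl (ρ (N1 ⊔ S.J n • N')) (ρ N') := B1mod S hb (hfg N') hbN
  -- multiplication by s
  have hε : Neg S.q d fun n => rl (ρ (U ⊔ N'.map (LinearMap.lsmul B M s) ⊔ S.J n • N1)) (ρ N1) := by
    refine B1mod S hsm (hfg N1) ?_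
    intro b hb x hx
    obtain ⟨a, ha, c, hc, rfl⟩ := Submodule.mem_sup.1 hb
    obtain ⟨r, rfl⟩ := Ideal.mem_span_singleton'.1 hc
    rw [add_smul]
    refine Submodule.add_mem_sup (haN a ha x (h2 hx)) ?_
    rw [mul_comm, mul_smul]
    exact ⟨_, N'.smul_mem _ (h2 hx), rfl⟩
  have hker : Neg S.q d fun n => rl (ρ (U ⊔ S.J n • N1)) (ρ N1 ⊓ ρ (U ⊔ S.J n • N')) := by
    refine (hc.add hε).mono fun n => ?_
    have a1 := rl_add (hWle n) (ρ N1)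
    have a2 := rl_add (hle2 n) (ρ N')
    rw [e2, rl_sup_left _ _ _ le_rfl] at a2
    have a3 : rl (ρ (U ⊔ S.J n • N1)) (ρ N1) ≤ rl (ρ (U ⊔ S.J n • N')) (ρ N') +
        rl (ρ (U ⊔ N'.map (LinearMap.lsmul B M s) ⊔ S.J n • N1)) (ρ N1) := by
      have hle : ρ (U ⊔ S.J n • N1) ≤ ρ (U ⊔ N'.map (LinearMap.lsmul B M s) ⊔ S.J n • N1) := rs_mono (sup_le_sup_right le_sup_left _)
      rw [rl_add hle]
      gcongr
      refine rl_le ((LinearMap.lsmul B M s).restrictScalars k) ?_ ?_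
      · intro x _ hx
        obtain ⟨u, hu, v, hv, rfl⟩ := Submodule.mem_sup.1 hx
        change s • (u + v) ∈ U ⊔ S.J n • N1
        rw [smul_add]
        refine Submodule.add_mem_sup (U.smul_mem _ hu) ?_
        clear hx
        rename_i hxX
        clear hxX
        induction hv using Submodule.smul_induction_on' with
        | smul b hb x hx => 
          rw [smul_comm]; exact Submodule.smul_mem_smul hb (hbN s hs x hx)
        | add x _ y _ hx hy => rw [smul_add]; exact Submodule.add_mem _ hx hy
      · rintro x ⟨-, hx⟩
        obtain ⟨u', hu', v, hv, rfl⟩ := Submodule.mem_sup.1 hx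
        obtain ⟨u, hu, w, hw, rfl⟩ := Submodule.mem_sup.1 hu'
        obtain ⟨z, hz, rfl⟩ := hw
        have : u + (LinearMap.lsmul B M s) z + v = s • z + (u + v) := by
          change u + s • z + v = _
          abel
        rw [this]
        exact Submodule.add_mem_sup ⟨z, hz, rfl⟩ (Submodule.add_mem_sup hu hv)
    rw [a1, a2] at a3
    have fin3 : rl (ρ (U ⊔ S.J n • N')) (ρ N1) ≠ ⊤ := by
      have := fin' n
      rw [a2] at this
      intro h; rw [h, top_add] at this; exact this rfl
    rw [add_comm, add_assoc] at a3
    exact (ENat.add_le_add_iff_left fin3).1 a3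
  have A1 := hs_App S y hℳ hN' (hfg N') (W := fun n => ρ (N1 ⊔ S.J n • N')) (Y := fun n => ρ N')
    (fun n => hN1.supB (Hg.smul hℳ (S.Jh n) hN')) (fun n => le_rfl) (fun n => rs_mono le_sup_right) hc
  have A2 := hs_App S y hℳ hN1 (hfg N1) (W := fun n => ρ (U ⊔ S.J n • N1)) (Y := fun n => ρ N1 ⊓ ρ (U ⊔ S.J n • N'))
    hW1 (fun n => inf_le_left) (fun n => rs_mono le_sup_right) hker
  refine (A1.sub A2).congr fun n => ?_
  unfold hh
  rw [hs_add _ (hW1 n) (hWle n) (fin1 n), hs_add _ (hW' n) (hle2 n) (fin' n), e2, hs_sup _ (hW' n) hN1]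
  ring

end GM
end FP
end

open Filter Complex
set_option maxHeartbeats 1000000
set_option linter.unusedSectionVars false
set_option linter.unusedVariables false
noncomputable section
namespace FP
section GM
variable {k B M : Type*} [Field k] [CommRing B] [Algebra k B]
   [AddCommGroup M] [Module B M] [Module k M] [IsScalarTower k B M]
   {𝒜 : ℤ → Submodule k B} [GradedAlgebra 𝒜]
   {ℳ : ℤ → Submodule k M} [DirectSum.Decomposition ℳ]

local notation "ρ" => Submodule.restrictScalars k

lemma hs_cyc (y : ℂ) (q : ℕ) (hℳ : GrM 𝒜 ℳ) {W N : Submodule B M} (hW : Hg ℳ (ρ W)) (hNW : N ≤ W)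
    {z : M} {t : ℤ} (hz : z ∈ ℳ t) {𝔠 : Ideal B} (h : ∀ b : B, b • z ∈ W ↔ b ∈ 𝔠) :
    hs ℳ (wt y q) (ρ W) (ρ (N ⊔ B ∙ z)) = wt y q t * hs 𝒜 (wt y q) (ρ 𝔠) ⊤ := by
  unfold hs
  rw [← (Equiv.addRight t).tsum_eq, ← tsum_mul_left]
  congr 1; ext i
  simp only [Equiv.coe_addRight]
  have e : rl (ρ W) (ρ (N ⊔ B ∙ z) ⊓ ℳ (i + t)) = rl (ρ 𝔠) (⊤ ⊓ 𝒜 i) := by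
    have e0 := rl_eq (mulz k z : B →ₗ[k] M) (W := ρ 𝔠) (W' := ρ W) (X := ⊤ ⊓ 𝒜 i)
      (by intro b _; exact (h b).symm)
    rw [← e0]
    apply le_antisymm
    · refine rl_mono le_rfl ?_
      rintro x ⟨hx, hxj⟩
      obtain ⟨n, hn, v, hv, rfl⟩ := Submodule.mem_sup.1 hx
      obtain ⟨b, rfl⟩ := Submodule.mem_span_singleton.1 hv
      rw [← DirectSum.decompose_of_mem_same _ hxj, DirectSum.decompose_add]
      simp only [DirectSum.add_apply, Submodule.coe_add]
      rw [dec_smul hℳ hz, add_comm]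
      exact Submodule.add_mem_sup ⟨_, ⟨trivial, SetLike.coe_mem _⟩, rfl⟩ (hW n (hNW hn) _)
    · refine rl_mono le_rfl (le_sup_of_le_left ?_)
      rintro _ ⟨b, ⟨-, hb⟩, rfl⟩
      exact ⟨Submodule.mem_sup_right (Submodule.smul_mem _ _ (Submodule.mem_span_singleton_self _)),
        hℳ _ _ _ hb _ hz⟩
  rw [e, wt_add]; ring

/-- `hB` is bounded by a multiple of `q^d` -/
lemma hB_bdd (S : Sys 𝒜) (y : ℂ) {d : ℕ} {Q : Ideal B} (hQh : Q.IsHomogeneous 𝒜) (hQ : small (d + 1) Q) :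
    hB S y Q =O[⊤] fun n => (S.q n : ℝ) ^ d := by
  refine (hB_App S y hQh hQ).congr_right fun n => ?_
  have : (S.q n : ℝ) ≠ 0 := by exact_mod_cast (S.qpos n).ne'
  field_simp
  ring

lemma wt_App (S : Sys 𝒜) (y : ℂ) {d : ℕ} (t : ℤ) {f : ℕ → ℂ} (hf : f =O[⊤] fun n => (S.q n : ℝ) ^ d) :
    App S.q d fun n => wt y (S.q n) t * f n - f n := by
  have h1 : (fun n => wt y (S.q n) t - 1) =O[⊤] fun n => (S.q n : ℝ)⁻¹ := by
    refine Asymptotics.IsBigO.of_bound ((‖y‖ * |(t : ℝ)|) * Real.exp (‖y‖ * |(t : ℝ)|)) ?_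
    rw [eventually_top]
    intro n
    refine (wt_sub_one y (S.qpos n) t).trans ?_
    rw [Real.norm_of_nonneg (by positivity), div_eq_mul_inv]
  refine ((h1.mul hf).congr_left fun n => ?_).congr_right fun n => ?_
  · ring
  · rw [div_eq_mul_inv, mul_comm]

lemma exists_hom_mul [IsNoetherianRing B] {𝔞 Q : Ideal B} (ha : 𝔞.IsHomogeneous 𝒜) (hr : 𝔞.IsRadical)
    (hQh : Q.IsHomogeneous 𝒜) (hQ : Q ∈ 𝔞.minimalPrimes) :
    ∃ s l, s ∈ 𝒜 l ∧ s ∉ Q ∧ ∀ x ∈ Q, s * x ∈ 𝔞 := by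
  have hpr := hQ.1.1
  have h1 : ∀ x ∈ Q, ∃ s, s ∉ Q ∧ s * x ∈ 𝔞 := by
    intro x hx
    by_contra hcon
    push Not at hcon
    have hd : Disjoint (𝔞 : Set B) (Q.primeCompl ⊔ Submonoid.powers x : Submonoid B) := by
      rw [Set.disjoint_left]
      intro w hw hw'
      obtain ⟨s, hs, v, ⟨i, rfl⟩, rfl⟩ := Submonoid.mem_sup.1 hw'
      refine hcon s hs (hr ⟨i + 1, ?_⟩)
      have : (s * x) ^ (i + 1) = s ^ i * x * (s * x ^ i) := by ring
      rw [this]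
      exact 𝔞.mul_mem_left _ hw
    obtain ⟨P, hP, haP, hdP⟩ := Ideal.exists_le_prime_disjoint _ _ hd
    rw [Set.disjoint_left] at hdP
    have hPQ : P ≤ Q := by
      intro w hw
      by_contra hwQ
      exact hdP hw ((le_sup_left : Q.primeCompl ≤ _) hwQ)
    have := hQ.2 ⟨hP, haP⟩ hPQ hx
    exact hdP this ((le_sup_right : Submonoid.powers x ≤ _) (Submonoid.mem_powers x))
  obtain ⟨g, hg⟩ := (IsNoetherian.noetherian Q : Q.FG)
  have h2 : ∃ s, s ∉ Q ∧ ∀ x ∈ Q, s * x ∈ 𝔞 := by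
    choose! f hf hf' using h1
    have hgQ : ∀ x ∈ g, x ∈ Q := fun x hx => by rw [← hg]; exact Submodule.subset_span hx
    refine ⟨∏ x ∈ g, f x, ?_, ?_⟩
    · intro h
      obtain ⟨x, hx, hx'⟩ := (hpr.prod_mem_iff).1 h
      exact hf x (hgQ x hx) hx'
    · intro x hx
      have : Q ≤ 𝔞.colon {∏ x ∈ g, f x} := by
        rw [← hg, Submodule.span_le]
        intro x hx
        change x ∈ 𝔞.colon _
        rw [Submodule.mem_colon_singleton, smul_eq_mul, mul_comm]
        classical
        rw [← Finset.mul_prod_erase _ _ (Finset.mem_coe.1 hx), mul_right_comm]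
        exact Ideal.mul_mem_right _ _ (hf' x (hgQ x hx))
      have := Submodule.mem_colon_singleton.1 (this hx)
      rwa [smul_eq_mul, mul_comm] at this
  obtain ⟨s, hs, hs'⟩ := h2
  have : ∃ l, (DirectSum.decompose 𝒜 s l : B) ∉ Q := by
    by_contra hcon
    push Not at hcon
    apply hs
    classical
    rw [← DirectSum.sum_support_decompose 𝒜 s]
    exact Q.sum_mem fun l _ => hcon l
  obtain ⟨l, hl⟩ := this
  refine ⟨_, l, SetLike.coe_mem _, hl, ?_⟩
  have : ρ Q ≤ ρ (𝔞.colon {(DirectSum.decompose 𝒜 s l : B)}) := by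
    refine (Hg.ideal hQh).le fun j x hx hxj => ?_
    change x ∈ 𝔞.colon _
    rw [Submodule.mem_colon_singleton, smul_eq_mul, mul_comm, ← smul_eq_mul, ← dec_smul GrM.self hxj]
    exact ha _ (hs' x hx)
  intro x hx
  have := Submodule.mem_colon_singleton.1 (this hx)
  rwa [smul_eq_mul, mul_comm] at this

theorem lemStep (S : Sys 𝒜) (y : ℂ) [IsNoetherian B M] (hℳ : GrM 𝒜 ℳ) {d : ℕ} {𝔞 : Ideal B}
    (ha : small (d + 1) 𝔞) (hah : 𝔞.IsHomogeneous 𝒜) (har : 𝔞.IsRadical)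
    {U N : Submodule B M} (hU : Hg ℳ (ρ U)) (hN : Hg ℳ (ρ N)) (hUN : U ≤ N) {m : M} {t : ℤ}
    (hm : m ∈ ℳ t) (hQ : (N.colon {m}).IsPrime) (haN : ∀ b ∈ 𝔞, ∀ x ∈ N ⊔ B ∙ m, b • x ∈ U) :
    App S.q d fun n => hh S y ℳ U (N ⊔ B ∙ m) n - hh S y ℳ U N n - hB S y (N.colon {m}) n := by
  have := S.noeth
  have hfg : ∀ X : Submodule B M, X.FG := fun X => IsNoetherian.noetherian X
  set Q := N.colon {m} with hQdef
  have memQ : ∀ b, b ∈ Q ↔ b • m ∈ N := fun b => Submodule.mem_colon_singleton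
  have hQh : Q.IsHomogeneous 𝒜 := Hg.colon hℳ hN hm
  have hmN' : m ∈ N ⊔ B ∙ m := Submodule.mem_sup_right (Submodule.mem_span_singleton_self _)
  have hN' : Hg ℳ (ρ (N ⊔ B ∙ m)) := hN.supB (Hg.sing hℳ hm)
  have haQ : 𝔞 ≤ Q := fun b hb => (memQ b).2 (hUN (haN b hb m hmN'))
  have hQm : ∀ b ∈ Q, ∀ x ∈ N ⊔ B ∙ m, b • x ∈ N := by
    intro b hb x hx
    obtain ⟨n, hn, v, hv, rfl⟩ := Submodule.mem_sup.1 hx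
    obtain ⟨c, rfl⟩ := Submodule.mem_span_singleton.1 hv
    rw [smul_add, smul_comm]
    exact N.add_mem (N.smul_mem _ hn) (N.smul_mem _ ((memQ b).1 hb))
  by_cases hsm : small d Q
  · have T1 := lemT S y hℳ ha hsm hU hN hN' hUN le_sup_left hQm haN
    exact T1.sub (hB_App S y hQh hsm)
  have hQmin : Q ∈ 𝔞.minimalPrimes := by
    obtain ⟨P0, hP0, hle⟩ := Ideal.exists_minimalPrimes_le haQ
    have hP0p := hP0.1.1
    rcases eq_or_lt_of_le hle with h | h
    · rwa [← h]
    · exact absurd (small.step (Q := ⟨P0, hP0p⟩) (ha ⟨P0, hP0p⟩ hP0.1.2) h) hsm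
  obtain ⟨s, l, hsl, hsQ, hs⟩ := exists_hom_mul hah har hQh hQmin
  have hz : s • m ∈ ℳ (l + t) := hℳ _ _ _ hsl _ hm
  have colz : ∀ b : B, b • s • m ∈ N ↔ b ∈ Q := by
    intro b
    rw [smul_smul, ← memQ]
    constructor
    · intro h; exact (hQ.mem_or_mem h).resolve_right hsQ
    · intro h; exact Ideal.mul_mem_right _ _ h
  have Qz : ∀ b ∈ Q, b • s • m ∈ U := by
    intro b hb
    rw [smul_smul, mul_comm]
    exact haN _ (hs b hb) m hmN'
  set z := s • m with hzdef
  have hN1 : Hg ℳ (ρ (N ⊔ B ∙ z)) := hN.supB (Hg.sing hℳ hz)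
  have hN1le : N ⊔ B ∙ z ≤ N ⊔ B ∙ m := sup_le_sup_left (by
    rw [Submodule.span_singleton_le_iff_mem]
    exact Submodule.smul_mem _ _ (Submodule.mem_span_singleton_self _)) _
  have hsmall : small d (Q ⊔ Ideal.span {s}) := by
    refine small.step (Q := ⟨Q, hQ⟩) (ha ⟨Q, hQ⟩ haQ) (lt_of_le_of_ne le_sup_left fun e => hsQ ?_)
    change Q = _ at e
    rw [e]; exact Submodule.mem_sup_right (Ideal.mem_span_singleton_self _)
  have T1 := lemT S y hℳ ha hsmall hU hN1 hN' (hUN.trans le_sup_left) hN1le (by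
    intro b hb x hx
    obtain ⟨c, hc, e, he, rfl⟩ := Submodule.mem_sup.1 hb
    obtain ⟨r, rfl⟩ := Ideal.mem_span_singleton'.1 he
    rw [add_smul]
    refine Submodule.add_mem _ (Submodule.mem_sup_left (hQm c hc x hx)) ?_
    obtain ⟨n, hn, v, hv, rfl⟩ := Submodule.mem_sup.1 hx
    obtain ⟨e, rfl⟩ := Submodule.mem_span_singleton.1 hv
    rw [smul_add]
    refine Submodule.add_mem_sup (N.smul_mem _ hn) ?_
    rw [smul_smul, mul_right_comm, mul_smul]
    exact Submodule.smul_mem _ _ (Submodule.mem_span_singleton_self _)) haN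
  have T2 := wt_App S y (l + t) (hB_bdd S y hQh (ha.mono haQ))
  refine (T1.add T2).congr fun n => ?_
  have key : hh S y ℳ U (N ⊔ B ∙ z) n = hh S y ℳ U N n + wt y (S.q n) (l + t) * hB S y Q n := by
    have eJ : S.J n • (N ⊔ B ∙ z) = S.J n • N ⊔ S.J n • (B ∙ z) := Submodule.smul_sup _ _ _
    have memJz : ∀ x, x ∈ S.J n • (B ∙ z) ↔ ∃ b ∈ S.J n, b • z = x := by
      intro x
      exact Submodule.mem_smul_span_singleton
    have hV : Hg ℳ (ρ (N ⊔ S.J n • (B ∙ z))) := hN.supB (Hg.smul hℳ (S.Jh n) (Hg.sing hℳ hz))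
    have hW : Hg ℳ (ρ (U ⊔ S.J n • (N ⊔ B ∙ z))) := hU.supB (Hg.smul hℳ (S.Jh n) hN1)
    have hWV : ρ (U ⊔ S.J n • (N ⊔ B ∙ z)) ≤ ρ (N ⊔ S.J n • (B ∙ z)) := by
      apply rs_mono
      rw [eJ]
      exact sup_le (hUN.trans le_sup_left) (sup_le_sup_right Submodule.smul_le_right _)
    have hfin : rl (ρ (U ⊔ S.J n • (N ⊔ B ∙ z))) (ρ (N ⊔ B ∙ z)) ≠ ⊤ :=
      (B1mod S ha (hfg _) fun b hb x hx => haN b hb x (hN1le hx)).ne_top S.qpos n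
    have e1 : ρ (N ⊔ B ∙ z) ⊓ ρ (N ⊔ S.J n • (B ∙ z)) = ρ N ⊔ ρ (U ⊔ S.J n • (N ⊔ B ∙ z)) := by
      rw [inf_eq_right.2 (rs_mono (sup_le_sup_left Submodule.smul_le_right _)), ← rs_sup]
      congr 1
      rw [eJ, ← sup_assoc, ← sup_assoc, sup_eq_left.2 hUN, sup_eq_left.2 (Submodule.smul_le_right : S.J n • N ≤ N)]
    unfold hh
    rw [hs_add _ hW hWV hfin, e1, hs_sup _ hW hN]
    congr 1
    · apply hs_congr_inf
      intro x hx
      constructor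
      · intro h
        change x ∈ U ⊔ S.J n • (N ⊔ B ∙ z) at h
        change x ∈ U ⊔ S.J n • N
        rw [eJ, ← sup_assoc] at h
        obtain ⟨u, hu, v, hv, rfl⟩ := Submodule.mem_sup.1 h
        obtain ⟨b, hb, rfl⟩ := (memJz v).1 hv
        have huN : u ∈ N := (sup_le hUN Submodule.smul_le_right : U ⊔ S.J n • N ≤ N) hu
        have hbz : b • z ∈ N := by
          have := N.sub_mem hx huN
          simpa using this
        exact Submodule.add_mem _ hu (Submodule.mem_sup_left (Qz b ((colz b).1 hbz)))
      · intro h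
        exact (sup_le_sup_left (Submodule.smul_mono le_rfl le_sup_left) U : U ⊔ S.J n • N ≤ _) h
    · unfold hB
      refine hs_cyc y _ hℳ hV le_sup_left hz ?_
      intro b
      constructor
      · intro h
        obtain ⟨u, hu, v, hv, huv⟩ := Submodule.mem_sup.1 h
        obtain ⟨c, hc, rfl⟩ := (memJz v).1 hv
        have : b - c ∈ Q := by
          rw [← colz, sub_smul, ← huv]; simpa using hu
        have e : b = (b - c) + c := by ring
        rw [e]
        exact Submodule.add_mem_sup this hc
      · intro h
        obtain ⟨u, hu, v, hv, rfl⟩ := Submodule.mem_sup.1 h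
        rw [add_smul]
        exact Submodule.add_mem_sup ((colz u).2 hu) ((memJz _).2 ⟨v, hv, rfl⟩)
  rw [key]
  ring

theorem lemAdd (S : Sys 𝒜) (y : ℂ) [IsNoetherian B M] (hℳ : GrM 𝒜 ℳ) {d : ℕ} {𝔞 : Ideal B}
    (ha : small (d + 1) 𝔞) (hah : 𝔞.IsHomogeneous 𝒜) (har : 𝔞.IsRadical)
    {U N X : Submodule B M} (hU : Hg ℳ (ρ U)) (hN : Hg ℳ (ρ N)) (hX : Hg ℳ (ρ X)) (hUN : U ≤ N) (hNX : N ≤ X)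
    (haX : ∀ b ∈ 𝔞, ∀ x ∈ X, b • x ∈ U) :
    App S.q d fun n => hh S y ℳ U X n - hh S y ℳ U N n - hh S y ℳ N X n := by
  have := S.noeth
  refine FI hℳ hN hX hNX (fun Y => App S.q d fun n => hh S y ℳ U Y n - hh S y ℳ U N n - hh S y ℳ N Y n) ?_ ?_
  · refine App.zero.congr fun n => ?_
    have : hh S y ℳ N N n = 0 := by
      unfold hh hs
      have : ∀ j, rl (ρ (N ⊔ S.J n • N)) (ρ N ⊓ ℳ j) = 0 := by
        intro j
        rw [rl_zero_iff]
        exact inf_le_left.trans (rs_mono le_sup_left)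
      simp only [this]
      simp
    rw [this]; ring
  · intro Y m t hY hNY hYX hmX hmt hpr ih
    have hle : Y ⊔ B ∙ m ≤ X := sup_le hYX (by rwa [Submodule.span_singleton_le_iff_mem])
    have s1 := lemStep S y hℳ ha hah har hU hY (hUN.trans hNY) hmt hpr
      (fun b hb x hx => haX b hb x (hle hx))
    have s2 := lemStep S y hℳ ha hah har hN hY hNY hmt hpr
      (fun b hb x hx => hUN (haX b hb x (hle hx)))
    refine ((ih.add s1).sub s2).congr fun n => ?_
    ring

/-- multiplicity statement, prime annihilator -/
theorem lemMult (S : Sys 𝒜) (y : ℂ) [IsNoetherian B M] (hℳ : GrM 𝒜 ℳ) {d : ℕ} {𝔞 : Ideal B}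
    (ha : small (d + 1) 𝔞) (hah : 𝔞.IsHomogeneous 𝒜) (hap : 𝔞.IsPrime)
    {U X : Submodule B M} (hU : Hg ℳ (ρ U)) (hX : Hg ℳ (ρ X)) (hUX : U ≤ X)
    (haX : ∀ b ∈ 𝔞, ∀ x ∈ X, b • x ∈ U) :
    ∃ r : ℕ, App S.q d fun n => hh S y ℳ U X n - r * hB S y 𝔞 n := by
  have := S.noeth
  refine FI hℳ hU hX hUX (fun Y => ∃ r : ℕ, App S.q d fun n => hh S y ℳ U Y n - r * hB S y 𝔞 n) ?_ ?_
  · refine ⟨0, App.zero.congr fun n => ?_⟩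
    have : hh S y ℳ U U n = 0 := by
      unfold hh hs
      have : ∀ j, rl (ρ (U ⊔ S.J n • U)) (ρ U ⊓ ℳ j) = 0 := by
        intro j
        rw [rl_zero_iff]
        exact inf_le_left.trans (rs_mono le_sup_left)
      simp only [this]
      simp
    rw [this]; simp
  · rintro Y m t hY hNY hYX hmX hmt hpr ⟨r, ih⟩
    have hle : Y ⊔ B ∙ m ≤ X := sup_le hYX (by rwa [Submodule.span_singleton_le_iff_mem])
    have s1 := lemStep S y hℳ ha hah hap.isRadical hU hY hNY hmt hpr
      (fun b hb x hx => haX b hb x (hle hx))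
    have hle' : 𝔞 ≤ Y.colon {m} := fun b hb => Submodule.mem_colon_singleton.2 (hNY (haX b hb m hmX))
    rcases eq_or_lt_of_le hle' with h | h
    · refine ⟨r + 1, (ih.add s1).congr fun n => ?_⟩
      rw [← h]; push_cast; ring
    · have hsm : small d (Y.colon {m}) := small.step (Q := ⟨𝔞, hap⟩) (ha ⟨𝔞, hap⟩ le_rfl) h
      refine ⟨r, ((ih.add s1).add (hB_App S y (Hg.colon hℳ hY hmt) hsm)).congr fun n => ?_⟩
      ring

end GM
end FP
end

open Filter Complex
set_option maxHeartbeats 1000000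
set_option linter.unusedSectionVars false
set_option linter.unusedVariables false
noncomputable section
namespace FP
section ML
open TensorProduct
variable {k D : Type} [Field k] [CommRing D] [Algebra k D] (p : ℕ) [Fact p.Prime] [CharP k p]

theorem maclane [Algebra.FiniteType k D] [Nontrivial D] :
    ∃ e : ℕ, ∀ (ι : Type) (x : ι → D), (∀ i, x i ∈ Submodule.span k (Set.range fun z : D => z ^ p ^ e)) →
      LinearIndependent k x → LinearIndependent k (fun i => x i ^ p) := by
  let K := AlgebraicClosure k
  let S := K ⊗[k] D
  have : CharP K p := charP_of_injective_algebraMap (algebraMap k K).injective p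
  have hSnt : Nontrivial S := inferInstance
  have : CharP S p := charP_of_injective_algebraMap (algebraMap K S).injective p
  have : ExpChar S p := ExpChar.prime Fact.out
  have : ExpChar K p := ExpChar.prime Fact.out
  have : IsNoetherianRing S := Algebra.FiniteType.isNoetherianRing K S
  obtain ⟨N, hN⟩ := IsNoetherianRing.isNilpotent_nilradical S
  have hp2 : 1 < p := (Fact.out : p.Prime).one_lt
  have hNe : ∀ w : S, IsNilpotent w → w ^ p ^ N = 0 := by
    intro w hw
    have h1 : w ^ N ∈ (nilradical S) ^ N := Ideal.pow_mem_pow hw N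
    rw [hN] at h1
    have : w ^ N = 0 := h1
    exact pow_eq_zero_of_le (Nat.lt_pow_self hp2).le this
  refine ⟨N, fun ι x hx hli => ?_⟩
  rw [linearIndependent_iff']
  intro s c hc i hi
  have hroot : ∀ (e : ℕ) (a : K), ∃ b : K, b ^ p ^ e = a := fun e a =>
    IsAlgClosed.exists_pow_nat_eq a (pow_pos (by omega) e)
  choose γ hγ using fun i => hroot 1 (algebraMap k K (c i))
  simp only [pow_one] at hγ
  set z : S := ∑ i ∈ s, γ i ⊗ₜ x i with hz
  have hz0 : z ^ p = 0 := by
    rw [hz, sum_pow_char]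
    have : ∀ i ∈ s, (γ i ⊗ₜ[k] x i) ^ p = (1 : K) ⊗ₜ[k] (c i • x i ^ p) := by
      intro i _
      rw [Algebra.TensorProduct.tmul_pow, hγ, Algebra.algebraMap_eq_smul_one, TensorProduct.smul_tmul]
    rw [Finset.sum_congr rfl this, ← TensorProduct.tmul_sum, hc, TensorProduct.tmul_zero]
  have hmem : ∀ (a : K) (v : D), v ∈ Submodule.span k (Set.range fun z : D => z ^ p ^ N) →
      (a ⊗ₜ[k] v : S) ∈ (iterateFrobenius S p N).range := by
    intro a v hv
    induction hv using Submodule.span_induction with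
    | mem v hv =>
      obtain ⟨u, rfl⟩ := hv
      obtain ⟨b, hb⟩ := hroot N a
      refine ⟨b ⊗ₜ u, ?_⟩
      rw [iterateFrobenius_def, Algebra.TensorProduct.tmul_pow, hb]
    | zero => rw [TensorProduct.tmul_zero]; exact Subring.zero_mem _
    | add v w _ _ h1 h2 => rw [TensorProduct.tmul_add]; exact Subring.add_mem _ h1 h2
    | smul b v _ h1 =>
      obtain ⟨b', hb⟩ := hroot N (algebraMap k K b)
      have : (a ⊗ₜ[k] (b • v) : S) = (b' ⊗ₜ[k] (1 : D)) ^ p ^ N * (a ⊗ₜ[k] v) := by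
        rw [Algebra.TensorProduct.tmul_pow, hb, one_pow, Algebra.TensorProduct.tmul_mul_tmul, one_mul,
          ← Algebra.smul_def, TensorProduct.smul_tmul]
      rw [this]
      exact Subring.mul_mem _ ⟨_, iterateFrobenius_def _ _ _⟩ h1
  have hzr : z ∈ (iterateFrobenius S p N).range := Subring.sum_mem _ fun i _ => hmem _ _ (hx i)
  obtain ⟨w, hw⟩ := hzr
  rw [iterateFrobenius_def] at hw
  have hz1 : z = 0 := by
    rw [← hw]
    refine hNe w ⟨p ^ N * p, ?_⟩
    rw [pow_mul, hw, hz0]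
  have hli' : LinearIndependent K (fun i => (1 : K) ⊗ₜ[k] x i) := Module.Flat.linearIndependent_one_tmul hli
  have := linearIndependent_iff'.1 hli' s γ (by
    rw [← hz1, hz]
    refine Finset.sum_congr rfl fun i _ => ?_
    rw [TensorProduct.smul_tmul', smul_eq_mul, mul_one]) i hi
  have h2 := hγ i
  rw [this, zero_pow (by omega)] at h2
  exact (map_eq_zero _).1 h2.symm


end ML

section Phi
variable {k D : Type} [Field k] [CommRing D] [Algebra k D] (p : ℕ) [Fact p.Prime] [CharP D p]

/-- span of `p`-th powers -/
def Ph (X : Submodule k D) : Submodule k D := Submodule.span k ((fun x => x ^ p) '' (X : Set D))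

variable {p}
lemma Ph_pow_mem {X : Submodule k D} {x : D} (hx : x ∈ X) : x ^ p ∈ Ph p X :=
  Submodule.subset_span ⟨x, hx, rfl⟩

lemma Ph_mono {X Y : Submodule k D} (h : X ≤ Y) : Ph p X ≤ Ph p Y :=
  Submodule.span_mono (Set.image_mono h)

/-- `p`-th powers of a span -/
lemma pow_mem_of_span {s : Set D} {Y : Submodule k D} (h : ∀ x ∈ s, x ^ p ∈ Y) {x : D}
    (hx : x ∈ Submodule.span k s) : x ^ p ∈ Y := by
  have hp0 : p ≠ 0 := (Fact.out : p.Prime).ne_zero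
  induction hx using Submodule.span_induction with
  | mem x hx => exact h x hx
  | zero => rw [zero_pow hp0]; exact Y.zero_mem
  | add x y _ _ h1 h2 => rw [add_pow_char]; exact Y.add_mem h1 h2
  | smul c x _ h1 => rw [smul_pow]; exact Y.smul_mem _ h1

lemma Ph_span (s : Set D) : Ph p (Submodule.span k s) = Submodule.span k ((fun x => x ^ p) '' s) := by
  apply le_antisymm
  · refine Submodule.span_le.2 ?_
    rintro _ ⟨x, hx, rfl⟩
    exact pow_mem_of_span (s := s) (by intro x hx; exact Submodule.subset_span ⟨x, hx, rfl⟩) hx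
  · exact Submodule.span_mono (Set.image_mono Submodule.subset_span)

lemma rl_of_LI {M : Type} [AddCommGroup M] [Module k M] {W X : Submodule k M} {ι : Type} (u : ι → M)
    (h : LinearIndependent k (W.mkQ ∘ u)) (hs : X.map W.mkQ = Submodule.span k (Set.range (W.mkQ ∘ u))) :
    rl W X = Cardinal.toENat (Cardinal.mk ι) := by
  unfold rl
  rw [Module.length_eq_rank, hs, rank_span h, Cardinal.mk_range_eq _ h.injective]

theorem rl_Ph {V W X : Submodule k D}
    (hV : ∀ (ι : Type) (x : ι → D), (∀ i, x i ∈ V) → LinearIndependent k x → LinearIndependent k fun i => x i ^ p)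
    (hW : W ≤ V) (hX : X ≤ V) : rl (Ph p W) (Ph p X) = rl W X := by
  let b := Module.Basis.ofVectorSpace k W
  let c := Module.Basis.ofVectorSpace k (X.map W.mkQ)
  have hc : ∀ i, ∃ x ∈ X, W.mkQ x = c i := fun i => (c i).2
  choose u huX hu using hc
  have hu' : W.mkQ ∘ u = fun i => (c i : D ⧸ W) := funext hu
  have hspan : X.map W.mkQ = Submodule.span k (Set.range (W.mkQ ∘ u)) := by
    rw [hu']
    have := congrArg (Submodule.map (X.map W.mkQ).subtype) c.span_eq
    rw [Submodule.map_span, Submodule.map_top, Submodule.range_subtype, ← Set.range_comp] at this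
    exact this.symm
  have hLI : LinearIndependent k (W.mkQ ∘ u) := by
    rw [hu']
    exact c.linearIndependent.map' (X.map W.mkQ).subtype (Submodule.ker_subtype _)
  have hsum := LinearIndependent.sumElim_of_quotient b.linearIndependent u hLI
  have hpow := hV _ _ (by
    rintro (i | i)
    · exact hW (b i).2
    · exact hX (huX i)) hsum
  obtain ⟨h1, h2, h3⟩ := linearIndependent_sum.1 hpow
  have hWspan : Submodule.span k (Set.range fun i => (b i : D)) = W := by
    have := congrArg (Submodule.map W.subtype) b.span_eq
    rw [Submodule.map_span, Submodule.map_top, Submodule.range_subtype, ← Set.range_comp] at this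
    exact this
  have hPW : Ph p W = Submodule.span k (Set.range fun i => (b i : D) ^ p) := by
    conv_lhs => rw [← hWspan]
    rw [Ph_span, ← Set.range_comp]; rfl
  rw [rl_of_LI u hLI hspan]
  refine rl_of_LI (fun i => u i ^ p) ?_ ?_
  · refine h2.map ?_
    rw [Submodule.ker_mkQ, hPW]
    exact h3.symm
  · have hXle : X ≤ Submodule.span k (Set.range u) ⊔ W := by
      rw [Set.range_comp, ← Submodule.map_span] at hspan
      intro x hx
      have : W.mkQ x ∈ (Submodule.span k (Set.range u)).map W.mkQ := by
        rw [← hspan]; exact ⟨x, hx, rfl⟩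
      obtain ⟨v, hv, hvx⟩ := this
      have : x - v ∈ W := by
        rw [← Submodule.Quotient.eq]; exact hvx.symm
      have e : x = v + (x - v) := by abel
      rw [e]
      exact Submodule.add_mem_sup hv this
    apply le_antisymm
    · rw [Set.range_comp, ← Submodule.map_span, Submodule.map_le_iff_le_comap, Submodule.comap_map_mkQ]
      refine Submodule.span_le.2 ?_
      rintro _ ⟨x, hx, rfl⟩
      obtain ⟨v, hv, w, hw, rfl⟩ := Submodule.mem_sup.1 (hXle hx)
      change (v + w) ^ p ∈ _
      rw [add_pow_char, add_comm]
      refine Submodule.add_mem_sup (Ph_pow_mem hw) (pow_mem_of_span ?_ hv)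
      rintro _ ⟨i, rfl⟩
      exact Submodule.subset_span ⟨i, rfl⟩
    · refine Submodule.span_le.2 ?_
      rintro _ ⟨i, rfl⟩
      exact ⟨_, Ph_pow_mem (huX i), rfl⟩

end Phi
end FP
end

open Filter Complex
set_option maxHeartbeats 1000000
set_option linter.unusedSectionVars false
set_option linter.unusedVariables false
noncomputable section
namespace FP
section Be
variable {k R : Type} [Field k] [CommRing R] [Algebra k R] {p : ℕ} [Fact p.Prime] [CharP R p]
   {𝒜 : ℤ → Submodule k R} [GradedAlgebra 𝒜]

local notation "ρ" => Submodule.restrictScalars k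

/-- the algebra generated by `p^e`-th powers -/
def Be (k R : Type) [Field k] [CommRing R] [Algebra k R] (p e : ℕ) : Subalgebra k R :=
  Algebra.adjoin k (Set.range fun x : R => x ^ p ^ e)

lemma Be_span (e : ℕ) : Subalgebra.toSubmodule (Be k R p e) =
    Submodule.span k (Set.range fun x : R => x ^ p ^ e) := by
  unfold Be
  rw [Algebra.adjoin_eq_span]
  congr 1
  have : (Set.range fun x : R => x ^ p ^ e) = (MonoidHom.mrange (powMonoidHom (p ^ e) : R →* R) : Set R) := by
    ext x; simp
  rw [this, Submonoid.closure_eq]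

lemma pow_mem_Be (e : ℕ) (x : R) : x ^ p ^ e ∈ Be k R p e := Algebra.subset_adjoin ⟨x, rfl⟩

lemma pow_sum_comp (m : ℕ) (x : R) [∀ i, DecidableEq (𝒜 i)] :
    x ^ p ^ m = ∑ j ∈ (DirectSum.decompose 𝒜 x).support, (DirectSum.decompose 𝒜 x j : R) ^ p ^ m := by
  classical
  conv_lhs => rw [← DirectSum.sum_support_decompose 𝒜 x]
  exact sum_pow_char_pow _ _ _ _ 

lemma Hg_Be (e : ℕ) : Hg 𝒜 (Subalgebra.toSubmodule (Be k R p e)) := by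
  classical
  have : Subalgebra.toSubmodule (Be k R p e) =
    Submodule.span k {z | ∃ x : R, (∃ j, x ∈ 𝒜 j) ∧ z = x ^ p ^ e} := by
    rw [Be_span]
    apply le_antisymm
    · refine Submodule.span_le.2 ?_
      rintro _ ⟨x, rfl⟩
      change x ^ p ^ e ∈ _
      rw [pow_sum_comp (𝒜 := 𝒜) e x]
      exact Submodule.sum_mem _ fun j _ => Submodule.subset_span ⟨_, ⟨j, SetLike.coe_mem _⟩, rfl⟩
    · refine Submodule.span_mono ?_
      rintro _ ⟨x, _, rfl⟩
      exact ⟨x, rfl⟩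
  rw [this]
  refine Hg.span ?_
  rintro _ ⟨x, ⟨j, hx⟩, rfl⟩
  exact ⟨_, SetLike.pow_mem_graded _ hx⟩

/-- induced grading -/
def grB (𝒜 : ℤ → Submodule k R) (C : Subalgebra k R) (j : ℤ) : Submodule k C :=
  (𝒜 j).comap C.val.toLinearMap

lemma mem_grB (C : Subalgebra k R) (j : ℤ) (x : C) : x ∈ grB 𝒜 C j ↔ (x : R) ∈ 𝒜 j := Iff.rfl

/-- induced grading on a homogeneous subalgebra -/
@[reducible] def gradedSub (C : Subalgebra k R) (hC : Hg 𝒜 (Subalgebra.toSubmodule C)) : GradedAlgebra (grB 𝒜 C) := by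
  classical
  have h1 : SetLike.GradedMonoid (grB 𝒜 C) :=
    { one_mem := SetLike.GradedOne.one_mem (A := 𝒜)
      mul_mem := fun i j x y hx hy => SetLike.mul_mem_graded (A := 𝒜) hx hy }
  have h2 : DirectSum.IsInternal (grB 𝒜 C) := by
    refine DirectSum.isInternal_submodule_of_iSupIndep_of_iSup_eq_top ?_ ?_
    · have := (DirectSum.Decomposition.isInternal 𝒜).submodule_iSupIndep
      have h3 : iSupIndep fun j => (grB 𝒜 C j).map C.val.toLinearMap :=
        this.mono fun j => Submodule.map_comap_le _ _
      have hinj : Function.Injective C.val.toLinearMap := Subtype.val_injective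
      rw [iSupIndep_def] at h3 ⊢
      intro i
      have := h3 i
      simp_rw [← Submodule.map_iSup] at this
      rw [disjoint_iff, ← Submodule.map_inf _ hinj] at this
      rw [disjoint_iff]
      exact Submodule.map_injective_of_injective hinj (this.trans (Submodule.map_bot _).symm)
    · rw [eq_top_iff]
      rintro x -
      have e : x = ∑ j ∈ (DirectSum.decompose 𝒜 (x : R)).support,
          (⟨(DirectSum.decompose 𝒜 (x : R) j : R), hC x x.2 j⟩ : C) := by
        apply Subtype.ext
        rw [AddSubmonoidClass.coe_finsetSum]
        exact (DirectSum.sum_support_decompose 𝒜 (x : R)).symm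
      rw [e]
      refine Submodule.sum_mem _ fun j _ => (le_iSup (grB 𝒜 C) j) ?_
      exact SetLike.coe_mem (DirectSum.decompose 𝒜 (x : R) j)
  have h3 := h2.chooseDecomposition
  exact { h1, h3 with }

instance (e : ℕ) : GradedAlgebra (grB 𝒜 (Be k R p e)) := gradedSub _ (Hg_Be e)

lemma dec_grB (C : Subalgebra k R) [GradedAlgebra (grB 𝒜 C)] (x : C) (j : ℤ) :
    ((DirectSum.decompose (grB 𝒜 C) x j : C) : R) = DirectSum.decompose 𝒜 (x : R) j := by
  classical
  conv_rhs => rw [← DirectSum.sum_support_decompose (grB 𝒜 C) x, AddSubmonoidClass.coe_finsetSum,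
    DirectSum.decompose_sum, DFinsupp.finsetSum_apply, AddSubmonoidClass.coe_finsetSum]
  have : ∀ i ∈ (DirectSum.decompose (grB 𝒜 C) x).support, ((DirectSum.decompose 𝒜 (((DirectSum.decompose (grB 𝒜 C) x i : C)) : R) j : 𝒜 j) : R) =
      if i = j then ((DirectSum.decompose (grB 𝒜 C) x i : C) : R) else 0 := by
    intro i _
    have hi : (((DirectSum.decompose (grB 𝒜 C) x i : C)) : R) ∈ 𝒜 i := (DirectSum.decompose (grB 𝒜 C) x i).2
    split_ifs with h
    · subst h; exact DirectSum.decompose_of_mem_same _ hi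
    · exact DirectSum.decompose_of_mem_ne _ hi h
  rw [Finset.sum_congr rfl this, Finset.sum_ite_eq']
  split_ifs with h
  · rfl
  · rw [DFinsupp.notMem_support_iff.1 h]; rfl

lemma gens [Algebra.FiniteType k R] (h𝒜neg : ∀ t : ℤ, t < 0 → 𝒜 t = ⊥)
    (h𝒜zero : ∀ x ∈ 𝒜 0, ∃ c : k, algebraMap k R c = x) :
    ∃ s : Finset R, (∀ f ∈ s, ∃ d : ℕ, 0 < d ∧ f ∈ 𝒜 d) ∧ Algebra.adjoin k (s : Set R) = ⊤ := by
  classical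
  obtain ⟨s0, hs0⟩ := (Algebra.FiniteType.out : (⊤ : Subalgebra k R).FG)
  refine ⟨s0.biUnion fun x => ((DirectSum.decompose 𝒜 x).support.filter (0 < ·)).image
    fun j => (DirectSum.decompose 𝒜 x j : R), ?_, ?_⟩
  · intro f hf
    simp only [Finset.mem_biUnion, Finset.mem_image, Finset.mem_filter] at hf
    obtain ⟨x, _, j, ⟨_, hj⟩, rfl⟩ := hf
    refine ⟨j.toNat, by omega, ?_⟩
    rw [Int.toNat_of_nonneg hj.le]
    exact SetLike.coe_mem _
  · rw [eq_top_iff, ← hs0]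
    refine Algebra.adjoin_le fun x hx => ?_
    rw [← DirectSum.sum_support_decompose 𝒜 x]
    refine Subalgebra.sum_mem _ fun j hj => ?_
    rcases lt_trichotomy j 0 with h | h | h
    · have h0 : (DirectSum.decompose 𝒜 x j : R) = 0 := by
        have h1 : ∀ z ∈ 𝒜 j, z = 0 := by rw [h𝒜neg j h]; intro z hz; simpa using hz
        exact h1 _ (SetLike.coe_mem _)
      rw [h0]; exact Subalgebra.zero_mem _
    · subst h
      obtain ⟨c, hc⟩ := h𝒜zero _ (DirectSum.decompose 𝒜 x 0).2
      rw [← hc]; exact Subalgebra.algebraMap_mem _ _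
    · refine Algebra.subset_adjoin ?_
      simp only [Finset.coe_biUnion, Set.mem_iUnion, Finset.mem_coe, Finset.mem_image, Finset.mem_filter]
      exact ⟨x, hx, j, ⟨hj, h⟩, rfl⟩

lemma pow_mem_I (h𝒜neg : ∀ t : ℤ, t < 0 → 𝒜 t = ⊥) {I : Ideal R} (hI : I.IsHomogeneous 𝒜)
    (hIfl : IsFiniteLength R (R ⧸ I)) {f : R} {d : ℕ} (hd : 0 < d) (hf : f ∈ 𝒜 d) : ∃ a, f ^ a ∈ I := by
  have := (isFiniteLength_iff_isNoetherian_isArtinian.1 hIfl).2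
  obtain ⟨n, y, hy⟩ := IsArtinian.exists_pow_succ_smul_dvd f (1 : R ⧸ I)
  obtain ⟨r, rfl⟩ := Ideal.Quotient.mk_surjective y
  refine ⟨n, ?_⟩
  have h1 : f ^ n.succ * r - f ^ n ∈ I := by
    rw [← Ideal.Quotient.eq]
    rw [← mul_one (f ^ n), map_mul, map_mul, map_one]
    exact hy
  have h2 := hI (n * d : ℤ) h1
  have hfn : ∀ m : ℕ, f ^ m ∈ 𝒜 ((m : ℤ) * d) := by
    intro m
    have := SetLike.pow_mem_graded m hf
    simpa using this
  rw [DirectSum.decompose_sub] at h2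
  simp only [DirectSum.sub_apply, AddSubgroupClass.coe_sub] at h2
  rw [DirectSum.decompose_of_mem_same _ (hfn n)] at h2
  have e : (n * d : ℤ) = (-d : ℤ) + (n.succ : ℤ) * d := by push_cast; ring
  have h3 : (DirectSum.decompose 𝒜 (f ^ n.succ * r) (n * d : ℤ) : R) = 0 := by
    rw [mul_comm (f ^ n.succ), e]
    have := dec_smul GrM.self (hfn n.succ) r (-d : ℤ)
    rw [smul_eq_mul] at this
    rw [this]
    have h0 : (DirectSum.decompose 𝒜 r (-d : ℤ) : R) = 0 := by
      have h1 : ∀ z ∈ 𝒜 (-d : ℤ), z = 0 := by rw [h𝒜neg _ (by omega)]; intro z hz; simpa using hz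
      exact h1 _ (SetLike.coe_mem _)
    rw [h0, zero_smul]
  rw [h3, zero_sub] at h2
  exact (neg_mem_iff).1 h2

end Be
end FP
end

open Filter Complex
set_option maxHeartbeats 1000000
set_option linter.unusedSectionVars false
set_option linter.unusedVariables false
noncomputable section
namespace FP
section Be
variable {k R : Type} [Field k] [CommRing R] [Algebra k R] {p : ℕ} [Fact p.Prime] [CharP R p]
   {𝒜 : ℤ → Submodule k R} [GradedAlgebra 𝒜] {I : Ideal R}
   {M : Type} [AddCommGroup M] [Module R M] [Module k M] [IsScalarTower k R M]
   {ℳ : ℤ → Submodule k M} [DirectSum.Decomposition ℳ]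

local notation "ρ" => Submodule.restrictScalars k

/-- the standing hypotheses -/
structure Dat (𝒜 : ℤ → Submodule k R) [GradedAlgebra 𝒜] (I : Ideal R) : Prop where
  neg : ∀ t : ℤ, t < 0 → 𝒜 t = ⊥
  zero : ∀ x ∈ 𝒜 0, ∃ c : k, algebraMap k R c = x
  hI : I.IsHomogeneous 𝒜
  fl : IsFiniteLength R (R ⧸ I)
  ft : Algebra.FiniteType k R

lemma pow_mem_Be' (e n : ℕ) (x : R) : x ^ p ^ (e + n) ∈ Be k R p e := by
  rw [add_comm, pow_add, pow_mul]; exact pow_mem_Be e _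

/-- the ideals in `Be` -/
def JJ (k : Type) {R : Type} [Field k] [CommRing R] [Algebra k R] (p : ℕ) (I : Ideal R) (e n : ℕ) :
    Ideal (Be k R p e) := Ideal.span {c | ∃ x ∈ I, (c : R) = x ^ p ^ (e + n)}

lemma JJ_hom (hI : I.IsHomogeneous 𝒜) (e n : ℕ) : (JJ k p I e n).IsHomogeneous (grB 𝒜 (Be k R p e)) := by
  classical
  have : JJ k p I e n = Ideal.span {c : Be k R p e | ∃ x ∈ I, (∃ j, x ∈ 𝒜 j) ∧ (c : R) = x ^ p ^ (e + n)} := by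
    apply le_antisymm
    · refine Ideal.span_le.2 ?_
      rintro c ⟨x, hx, hc⟩
      have : c = ∑ j ∈ (DirectSum.decompose 𝒜 x).support,
          (⟨(DirectSum.decompose 𝒜 x j : R) ^ p ^ (e + n), pow_mem_Be' e n _⟩ : Be k R p e) := by
        apply Subtype.ext
        rw [AddSubmonoidClass.coe_finsetSum, hc]
        exact pow_sum_comp _ _
      rw [this]
      exact Ideal.sum_mem _ fun j _ => Ideal.subset_span ⟨_, hI j hx, ⟨j, SetLike.coe_mem _⟩, rfl⟩
    · refine Ideal.span_mono ?_
      rintro c ⟨x, hx, -, hc⟩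
      exact ⟨x, hx, hc⟩
  rw [this]
  refine Ideal.homogeneous_span _ _ ?_
  rintro c ⟨x, hx, ⟨j, hj⟩, hc⟩
  refine ⟨p ^ (e + n) • j, ?_⟩
  rw [mem_grB, hc]
  exact SetLike.pow_mem_graded _ hj

theorem exists_sys (D : Dat 𝒜 I) (e : ℕ) :
    ∃ S : Sys (grB 𝒜 (Be k R p e)), S.q = (fun n => p ^ n) ∧ S.J = JJ k p I e := by
  classical
  have := D.ft
  have hp0 : 0 < p := (Fact.out : p.Prime).pos
  obtain ⟨s, hs, hgen⟩ := gens D.neg D.zero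
  choose! dg hdg hdg' using hs
  have ha : ∀ f ∈ s, ∃ a, f ^ a ∈ I := fun f hf => pow_mem_I D.neg D.hI D.fl (hdg f hf) (hdg' f hf)
  choose! a ha using ha
  let φ : R → Be k R p e := fun x => ⟨x ^ p ^ e, pow_mem_Be e x⟩
  have hdeg : ∀ f ∈ s.image φ, ∃ t : ℕ, 0 < t ∧ f ∈ grB 𝒜 (Be k R p e) t := by
    intro f hf
    obtain ⟨x, hx, rfl⟩ := Finset.mem_image.1 hf
    refine ⟨p ^ e * dg x, by have := hdg x hx; positivity, ?_⟩
    have := SetLike.pow_mem_graded (p ^ e) (hdg' x hx)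
    rw [mem_grB]
    simpa using this
  choose! dg' hd1 hd2 using hdeg
  refine ⟨{ q := fun n => p ^ n, qpos := fun n => by positivity, J := JJ k p I e, Jh := JJ_hom D.hI e,
            s := s.image φ, deg := dg', hdeg := hd2, dpos := hd1, gen := ?_, a := ∑ f ∈ s, a f, ha := ?_ }, rfl, rfl⟩
  · have h1 : ∀ x : R, x ^ p ^ e ∈ (Algebra.adjoin k (s.image φ : Set (Be k R p e))).map (Be k R p e).val := by
      intro x
      have hx : x ∈ Algebra.adjoin k (s : Set R) := by rw [hgen]; trivial
      induction hx using Algebra.adjoin_induction with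
      | mem x hx => exact ⟨φ x, Algebra.subset_adjoin (by simpa using ⟨x, hx, rfl⟩), rfl⟩
      | algebraMap r => rw [← map_pow]; exact Subalgebra.algebraMap_mem _ _
      | add x y _ _ h1 h2 => rw [add_pow_char_pow]; exact Subalgebra.add_mem _ h1 h2
      | mul x y _ _ h1 h2 => rw [mul_pow]; exact Subalgebra.mul_mem _ h1 h2
    have h2 : Be k R p e ≤ (Algebra.adjoin k (s.image φ : Set (Be k R p e))).map (Be k R p e).val := by
      conv_lhs => unfold Be
      refine Algebra.adjoin_le ?_
      rintro _ ⟨x, rfl⟩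
      exact h1 x
    rw [eq_top_iff]
    rintro x -
    obtain ⟨z, hz, hzx⟩ := h2 x.2
    have : z = x := Subtype.ext hzx
    rwa [← this]
  · intro f hf n
    obtain ⟨x, hx, rfl⟩ := Finset.mem_image.1 hf
    refine Ideal.subset_span ⟨x ^ ∑ f ∈ s, a f, ?_, ?_⟩
    · exact Ideal.pow_mem_of_pow_mem _ (ha x hx) (Finset.single_le_sum (f := a) (fun _ _ => Nat.zero_le _) hx)
    · change (x ^ p ^ e) ^ _ = _
      rw [← pow_mul, ← pow_mul]; congr 1; rw [pow_add]; ring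

/-- the system on `Be` -/
def sysE (D : Dat 𝒜 I) (p : ℕ) [Fact p.Prime] [CharP R p] (e : ℕ) : Sys (grB 𝒜 (Be k R p e)) := (exists_sys D e).choose
lemma sysE_q (D : Dat 𝒜 I) (e : ℕ) : (sysE D p e).q = fun n => p ^ n := (exists_sys D e).choose_spec.1
lemma sysE_J (D : Dat 𝒜 I) (e : ℕ) : (sysE D p e).J = JJ k p I e := (exists_sys D e).choose_spec.2

/-- bracket multiplication -/
def br (p : ℕ) (I : Ideal R) (m : ℕ) (N : Submodule k M) : Submodule k M :=
  Submodule.span k {z | ∃ x ∈ I, ∃ v ∈ N, z = x ^ p ^ m • v}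

lemma br_JJ (e n : ℕ) (X : Submodule (Be k R p e) M) :
    ρ (JJ k p I e n • X) = br p I (e + n) (ρ X) := by
  apply le_antisymm
  · intro z hz
    have hz' : z ∈ JJ k p I e n • X := hz
    induction hz' using Submodule.smul_induction_on' with
    | smul b hb v hv =>
      clear hz
      unfold JJ at hb
      induction hb using Submodule.span_induction generalizing v with
      | mem c hc =>
        obtain ⟨x, hx, hc⟩ := hc
        refine Submodule.subset_span ⟨x, hx, v, hv, ?_⟩
        rw [← hc]; rfl
      | zero => rw [zero_smul]; exact Submodule.zero_mem _
      | add b c _ _ h1 h2 => rw [add_smul]; exact Submodule.add_mem _ (h1 v hv) (h2 v hv)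
      | smul a b _ h1 => rw [smul_eq_mul, mul_comm, mul_smul]; exact h1 _ (X.smul_mem _ hv)
    | add x hx y hy h1 h2 => exact Submodule.add_mem _ (h1 hx) (h2 hy)
  · refine Submodule.span_le.2 ?_
    rintro _ ⟨x, hx, v, hv, rfl⟩
    have : (⟨x ^ p ^ (e + n), pow_mem_Be' e n x⟩ : Be k R p e) ∈ JJ k p I e n := Ideal.subset_span ⟨x, hx, rfl⟩
    have hv' : v ∈ X := hv
    have h2 : (⟨x ^ p ^ (e + n), pow_mem_Be' e n x⟩ : Be k R p e) • v ∈ JJ k p I e n • X :=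
      Submodule.smul_mem_smul this hv'
    exact h2

lemma br_bracket (m : ℕ) (X : Submodule R M) :
    ρ (bracketPow I (p ^ m) • X) = br p I m (ρ X) := by
  apply le_antisymm
  · intro z hz
    have hz' : z ∈ bracketPow I (p ^ m) • X := hz
    induction hz' using Submodule.smul_induction_on' with
    | smul b hb v hv =>
      clear hz
      unfold bracketPow at hb
      induction hb using Submodule.span_induction generalizing v with
      | mem c hc =>
        obtain ⟨x, hx, rfl⟩ := hc
        exact Submodule.subset_span ⟨x, hx, v, hv, rfl⟩
      | zero => rw [zero_smul]; exact Submodule.zero_mem _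
      | add b c _ _ h1 h2 => rw [add_smul]; exact Submodule.add_mem _ (h1 v hv) (h2 v hv)
      | smul a b _ h1 => rw [smul_eq_mul, mul_comm, mul_smul]; exact h1 _ (X.smul_mem _ hv)
    | add x hx y hy h1 h2 => exact Submodule.add_mem _ (h1 hx) (h2 hy)
  · refine Submodule.span_le.2 ?_
    rintro _ ⟨x, hx, v, hv, rfl⟩
    have : x ^ p ^ m ∈ bracketPow I (p ^ m) := Ideal.subset_span ⟨x, hx, rfl⟩
    have hv' : v ∈ X := hv
    have h2 : x ^ p ^ m • v ∈ bracketPow I (p ^ m) • X := Submodule.smul_mem_smul this hv'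
    exact h2

/-- level independent Hilbert sums -/
def HH (p : ℕ) (I : Ideal R) (ℳ : ℤ → Submodule k M) [DirectSum.Decomposition ℳ] (y : ℂ) (U X : Submodule k M) (m : ℕ) : ℂ :=
  hs ℳ (wt y (p ^ m)) (U ⊔ br p I m X) X

lemma wt_shift (y : ℂ) (e n : ℕ) (j : ℤ) : wt (y / (p : ℂ) ^ e) (p ^ n) j = wt y (p ^ (e + n)) j := by
  have : (p : ℂ) ≠ 0 := by exact_mod_cast (Fact.out : p.Prime).ne_zero
  unfold wt
  congr 1
  push_cast
  rw [pow_add]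
  field_simp

lemma hh_HH (D : Dat 𝒜 I) (y : ℂ) (e n : ℕ) (U X : Submodule (Be k R p e) M) :
    hh (sysE D p e) (y / (p : ℂ) ^ e) ℳ U X n = HH p I ℳ y (ρ U) (ρ X) (e + n) := by
  unfold hh HH
  rw [sysE_q, sysE_J, rs_sup, br_JJ]
  congr 1
  ext j
  exact wt_shift y e n j

/-- contraction of an ideal -/
def ctr (p e : ℕ) (𝔠 : Ideal R) : Ideal (Be k R p e) := 𝔠.comap (Be k R p e).val

lemma hB_HH (D : Dat 𝒜 I) (y : ℂ) (e n : ℕ) (𝔠 : Ideal R) :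
    hB (sysE D p e) (y / (p : ℂ) ^ e) (ctr p e 𝔠) n =
      HH p I 𝒜 y (ρ 𝔠) (Subalgebra.toSubmodule (Be k R p e)) (e + n) := by
  unfold hB HH hs
  congr 1
  ext j
  rw [sysE_q, sysE_J, wt_shift]
  congr 3
  set C := Be k R p e
  set f : C →ₗ[k] R := C.val.toLinearMap
  have e1 : (Subalgebra.toSubmodule C) ⊓ 𝒜 j = (⊤ ⊓ grB 𝒜 C j).map f := by
    ext x
    constructor
    · rintro ⟨h1, h2⟩; exact ⟨⟨x, h1⟩, ⟨trivial, h2⟩, rfl⟩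
    · rintro ⟨x, ⟨-, h⟩, rfl⟩; exact ⟨x.2, h⟩
  rw [e1]
  symm
  have e2 : br p I (e + n) (Subalgebra.toSubmodule C) = (ρ (JJ k p I e n)).map f := by
    have h := br_JJ (k := k) (I := I) (p := p) (M := R) e n (LinearMap.range (Algebra.linearMap C R))
    have h1 : ρ (LinearMap.range (Algebra.linearMap C R)) = Subalgebra.toSubmodule C := by
      ext x
      constructor
      · rintro ⟨x, rfl⟩; exact x.2
      · intro h; exact ⟨⟨x, h⟩, rfl⟩
    rw [h1] at h
    rw [← h]
    have h2 : LinearMap.range (Algebra.linearMap C R) = Submodule.map (Algebra.linearMap C R) ⊤ := by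
      rw [Submodule.map_top]
    rw [h2, ← Submodule.map_smul'', smul_eq_mul, Ideal.mul_top]
    rfl
  refine rl_eq f ?_
  intro c _
  rw [e2]
  constructor
  · intro h
    obtain ⟨u, hu, v, hv, rfl⟩ := Submodule.mem_sup.1 h
    exact Submodule.add_mem_sup hu ⟨v, hv, rfl⟩
  · intro h
    obtain ⟨u, hu, _, ⟨v, hv, rfl⟩, h⟩ := Submodule.mem_sup.1 h
    have : c = (c - v) + v := by ring
    rw [this]
    refine Submodule.add_mem_sup (?_ : c - v ∈ ctr p e 𝔠) hv
    change f (c - v) ∈ 𝔠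
    rw [map_sub, ← h]
    simpa using hu

end Be
end FP
end

open Filter Complex
set_option maxHeartbeats 1000000
set_option linter.unusedSectionVars false
set_option linter.unusedVariables false
noncomputable section
namespace FP
section Be
variable {k R : Type} [Field k] [CommRing R] [Algebra k R] {p : ℕ} [Fact p.Prime] [CharP R p]
   {𝒜 : ℤ → Submodule k R} [GradedAlgebra 𝒜] {I : Ideal R}
   {M : Type} [AddCommGroup M] [Module R M] [Module k M] [IsScalarTower k R M]
   {ℳ : ℤ → Submodule k M} [DirectSum.Decomposition ℳ]

local notation "ρ" => Submodule.restrictScalars k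

/-- Frobenius into `Be` -/
def frE (k : Type) {R : Type} [Field k] [CommRing R] [Algebra k R] (p : ℕ) [Fact p.Prime] [CharP R p] (e : ℕ) :
    R →+* Be k R p e :=
  (iterateFrobenius R p e).codRestrict (Be k R p e) (fun x => pow_mem_Be e x)

lemma frE_coe (e : ℕ) (x : Be k R p e) : frE k p e (x : R) = x ^ p ^ e := Subtype.ext rfl

lemma small_ctr {d e : ℕ} {𝔠 : Ideal R} (h : small d 𝔠) : small d (ctr (k := k) p e 𝔠) := by
  intro P hP
  let F := PrimeSpectrum.comap (frE k (R := R) p e)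
  have hF : StrictMono F := by
    intro P Q hPQ
    refine lt_of_le_of_ne (Ideal.comap_mono hPQ.le) fun he => hPQ.not_ge ?_
    intro x hx
    have h1 : (x : R) ∈ (F Q).asIdeal := by
      change frE k p e (x : R) ∈ Q.asIdeal
      rw [frE_coe]; exact Ideal.pow_mem_of_mem _ hx _ (pow_pos (Fact.out : p.Prime).pos _)
    rw [← he] at h1
    change frE k p e (x : R) ∈ P.asIdeal at h1
    rw [frE_coe] at h1
    exact P.2.mem_of_pow_mem _ h1
  refine lt_of_le_of_lt (Order.coheight_le_coheight_apply_of_strictMono F hF P) (h (F P) ?_)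
  intro x hx
  change frE k p e x ∈ P.asIdeal
  refine hP ?_
  change x ^ p ^ e ∈ 𝔠
  exact Ideal.pow_mem_of_mem _ hx _ (pow_pos (Fact.out : p.Prime).pos _)

lemma ctr_hom {e : ℕ} {𝔠 : Ideal R} (h : 𝔠.IsHomogeneous 𝒜) : (ctr p e 𝔠).IsHomogeneous (grB 𝒜 (Be k R p e)) := by
  intro j x hx
  change ((DirectSum.decompose (grB 𝒜 (Be k R p e)) x j : Be k R p e) : R) ∈ 𝔠
  rw [dec_grB]
  exact h j hx

instance (e : ℕ) : Algebra.IsIntegral (Be k R p e) R := by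
  refine ⟨fun x => IsIntegral.of_pow (pow_pos (Fact.out : p.Prime).pos e) ?_⟩
  exact isIntegral_algebraMap (R := Be k R p e) (x := ⟨x ^ p ^ e, pow_mem_Be e x⟩)

lemma finR (D : Dat 𝒜 I) (e : ℕ) : Module.Finite (Be k R p e) R := by
  have := D.ft
  have : Algebra.FiniteType (Be k R p e) R := Algebra.FiniteType.of_restrictScalars_finiteType k _ _
  exact Algebra.IsIntegral.finite

lemma noethM (D : Dat 𝒜 I) (e : ℕ) [Module.Finite R M] : IsNoetherian (Be k R p e) M := by
  have := finR (p := p) D e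
  have := (sysE D p e).noeth
  have : Module.Finite (Be k R p e) M := Module.Finite.trans R M
  exact isNoetherian_of_isNoetherianRing_of_finite _ _

lemma grM_Be (hℳ : GrM 𝒜 ℳ) (e : ℕ) : GrM (grB 𝒜 (Be k R p e)) ℳ :=
  fun a b r hr x hx => hℳ a b r hr x hx

/-- negligible, level independent -/
def Ap (p d : ℕ) (f : ℕ → ℂ) : Prop := f =O[atTop] fun m => (p : ℝ) ^ (m * d) / (p : ℝ) ^ m

lemma Ap.add {d : ℕ} {f g : ℕ → ℂ} (hf : Ap p d f) (hg : Ap p d g) :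
    Ap p d (fun n => f n + g n) := Asymptotics.IsBigO.add hf hg
lemma Ap.sub {d : ℕ} {f g : ℕ → ℂ} (hf : Ap p d f) (hg : Ap p d g) :
    Ap p d (fun n => f n - g n) := Asymptotics.IsBigO.sub hf hg
lemma Ap.congr {d : ℕ} {f g : ℕ → ℂ} (hf : Ap p d f) (h : ∀ n, g n = f n) : Ap p d g := by
  have : g = f := funext h
  rwa [this]
lemma Ap.zero {d : ℕ} : Ap p d (fun _ => 0) := Asymptotics.isBigO_zero _ _

lemma bigO_shift {d e : ℕ} {f : ℕ → ℂ} {g : ℕ → ℝ} (K : ℝ) (hg : ∀ n, g n = K * g (e + n))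
    (h : (fun n => f (e + n)) =O[⊤] g) : f =O[atTop] g := by
  have h1 := (h.mono (le_top : (atTop : Filter ℕ) ≤ ⊤)).comp_tendsto (tendsto_sub_atTop_nat e)
  have h2 : f =ᶠ[atTop] (fun n => f (e + n)) ∘ (fun a => a - e) := by
    filter_upwards [eventually_ge_atTop e] with m hm
    simp [Nat.add_sub_cancel' hm]
  have h3 : (g ∘ fun a => a - e) =ᶠ[atTop] fun m => K * g m := by
    filter_upwards [eventually_ge_atTop e] with m hm
    simp only [Function.comp]
    rw [hg, Nat.add_sub_cancel' hm]
  refine h2.trans_isBigO (h1.trans ?_)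
  refine h3.trans_isBigO ?_
  exact Asymptotics.isBigO_const_mul_self K g _

lemma Ap_of {d e : ℕ} {f : ℕ → ℂ} (h : App (fun n => p ^ n) d fun n => f (e + n)) : Ap p d f := by
  have hp : (p : ℝ) ≠ 0 := by exact_mod_cast (Fact.out : p.Prime).ne_zero
  refine bigO_shift (d := d) (e := e) ((p : ℝ) ^ e / (p : ℝ) ^ (e * d)) ?_ ?_
  · intro n
    rw [add_mul, pow_add, pow_add]
    field_simp
  · refine Asymptotics.IsBigO.congr_right h fun n => ?_
    push_cast
    rw [← pow_mul]

theorem HH_bdd (D : Dat 𝒜 I) (y : ℂ) (e : ℕ) {d : ℕ} {P : Ideal R} (hP : P.IsHomogeneous 𝒜) (hd : small (d + 1) P) :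
    HH p I 𝒜 y (ρ P) (Subalgebra.toSubmodule (Be k R p e)) =O[atTop] fun m => (p : ℝ) ^ (m * d) := by
  have hp : (p : ℝ) ≠ 0 := by exact_mod_cast (Fact.out : p.Prime).ne_zero
  refine bigO_shift (d := d) (e := e) (1 / (p : ℝ) ^ (e * d)) ?_ ?_
  · intro n
    rw [add_mul, pow_add]
    field_simp
  · have h := hB_bdd (sysE D p e) (y / (p : ℂ) ^ e) (ctr_hom hP) (small_ctr hd)
    rw [sysE_q] at h
    refine (h.congr_left fun n => hB_HH D y e n P).congr_right fun n => ?_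
    push_cast
    rw [← pow_mul]

theorem HH_add [Module.Finite R M] (D : Dat 𝒜 I) (y : ℂ) (e : ℕ) (hℳ : GrM 𝒜 ℳ) {d : ℕ} {𝔠 : Ideal R} (hc : 𝔠.IsHomogeneous 𝒜)
    (hd : small (d + 1) 𝔠) (hr : (ctr (k := k) p e 𝔠).IsRadical)
    {U N X : Submodule R M} (hU : Hg ℳ (ρ U)) (hN : Hg ℳ (ρ N)) (hX : Hg ℳ (ρ X)) (hUN : U ≤ N) (hNX : N ≤ X)
    (hcX : ∀ b ∈ 𝔠, ∀ x ∈ X, b • x ∈ U) :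
    Ap p d fun m => HH p I ℳ y (ρ U) (ρ X) m - HH p I ℳ y (ρ U) (ρ N) m - HH p I ℳ y (ρ N) (ρ X) m := by
  have := noethM (p := p) (M := M) D e
  have h := lemAdd (sysE D p e) (y / (p : ℂ) ^ e) (grM_Be hℳ e) (small_ctr hd) (ctr_hom hc) hr
    (U := U.restrictScalars (Be k R p e)) (N := N.restrictScalars (Be k R p e)) (X := X.restrictScalars (Be k R p e))
    hU hN hX hUN hNX (fun b hb x hx => hcX b hb x hx)
  rw [sysE_q] at h
  refine Ap_of (e := e) (h.congr fun n => ?_)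
  rw [hh_HH, hh_HH, hh_HH]
  rfl

theorem HH_mult (D : Dat 𝒜 I) (y : ℂ) (e : ℕ) {d : ℕ} {P : Ideal R} (hc : P.IsHomogeneous 𝒜)
    (hd : small (d + 1) P) (hr : P.IsPrime)
    {X : Submodule (Be k R p e) R} (hX : Hg 𝒜 (ρ X)) :
    ∃ r : ℕ, Ap p d fun m => HH p I 𝒜 y (ρ P) (ρ X) m -
      r * HH p I 𝒜 y (ρ P) (Subalgebra.toSubmodule (Be k R p e)) m := by
  have := noethM (p := p) (M := R) D e
  have hpr : (ctr (k := k) p e P).IsPrime := Ideal.comap_isPrime _ _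
  obtain ⟨r, h⟩ := lemMult (sysE D p e) (y / (p : ℂ) ^ e) (grM_Be GrM.self e) (small_ctr hd) (ctr_hom hc) hpr
    (U := P.restrictScalars (Be k R p e) ⊓ X) (X := X)
    ((Hg.ideal hc).inf hX) hX inf_le_right (fun b hb x hx => ⟨P.mul_mem_right _ hb, X.smul_mem _ hx⟩)
  refine ⟨r, ?_⟩
  rw [sysE_q] at h
  refine Ap_of (e := e) (h.congr fun n => ?_)
  rw [hh_HH, hB_HH]
  congr 1
  unfold HH
  refine hs_congr_inf _ fun x hx => ?_
  constructor
  · intro h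
    obtain ⟨u, hu, v, hv, rfl⟩ := Submodule.mem_sup.1 h
    have hvX : v ∈ X := by
      have : br p I (e + n) (ρ X) ≤ ρ X := by
        rw [← br_JJ]; exact Submodule.smul_le_right
      exact this hv
    refine Submodule.add_mem_sup ⟨hu, ?_⟩ hv
    have := X.sub_mem hx hvX
    simpa using this
  · intro h
    have hle : ρ (P.restrictScalars (Be k R p e) ⊓ X) ≤ ρ P := fun z hz => hz.1
    exact (sup_le_sup_right hle _) h

theorem HH_small (D : Dat 𝒜 I) (y : ℂ) {d : ℕ} {Q : Ideal R} (hc : Q.IsHomogeneous 𝒜)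
    (hd : small d Q) : Ap p d (HH p I 𝒜 y (ρ Q) ⊤) := by
  have := noethM (p := p) (M := R) D 0
  let S := sysE D p 0
  have hfg : (⊤ : Submodule (Be k R p 0) R).FG := IsNoetherian.noetherian _
  have h1 := B1mod S (small_ctr hd) hfg (U := Q.restrictScalars (Be k R p 0)) (fun b hb x _ => Q.mul_mem_right _ hb)
  have hℳ : GrM (grB 𝒜 (Be k R p 0)) 𝒜 := grM_Be GrM.self 0
  have h := hs_App S (y / (p : ℂ) ^ 0) hℳ (X := ⊤) Hg.top hfg
    (W := fun n => ρ (Q.restrictScalars (Be k R p 0) ⊔ S.J n • ⊤)) (Y := fun n => ρ ⊤)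
    (fun n => Hg.supB (Hg.ideal hc) (Hg.smul hℳ (S.Jh n) Hg.top)) (fun n => le_rfl)
    (fun n => rs_mono le_sup_right) h1
  refine Ap_of (e := 0) ?_
  rw [show S.q = fun n => p ^ n from sysE_q D 0] at h
  refine h.congr fun n => ?_
  have := hh_HH (ℳ := 𝒜) D y 0 n (Q.restrictScalars (Be k R p 0)) ⊤
  unfold hh at this
  rw [sysE_q] at this
  exact this.symm

end Be
end FP
end

open Filter Complex
set_option maxHeartbeats 1000000
set_option linter.unusedSectionVars false
set_option linter.unusedVariables false
noncomputable section
namespace FP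
section Frob
variable {k R : Type} [Field k] [CommRing R] [Algebra k R] {p : ℕ} [Fact p.Prime] [CharP R p]
   {𝒜 : ℤ → Submodule k R} [GradedAlgebra 𝒜] {I : Ideal R}

local notation "ρ" => Submodule.restrictScalars k

lemma Ph_Be (e : ℕ) : Ph p (Subalgebra.toSubmodule (Be k R p e)) = Subalgebra.toSubmodule (Be k R p (e + 1)) := by
  rw [Be_span, Be_span, Ph_span, ← Set.range_comp]
  congr 2
  ext x
  simp only [Function.comp]
  rw [← pow_mul, ← pow_succ]

lemma Ph_map {D : Type} [CommRing D] [Algebra k D] (f : R →ₐ[k] D) (X : Submodule k R) :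
    (Ph p X).map f.toLinearMap = Ph p (X.map f.toLinearMap) := by
  unfold Ph
  rw [Submodule.map_span, Submodule.map_coe, Set.image_image, Set.image_image]
  congr 1
  ext x
  simp

lemma Ph_br (m : ℕ) (X : Submodule k R) : Ph p (br p I m X) = br p I (m + 1) (Ph p X) := by
  apply le_antisymm
  · unfold br
    rw [Ph_span]
    refine Submodule.span_le.2 ?_
    rintro _ ⟨_, ⟨x, hx, v, hv, rfl⟩, rfl⟩
    refine Submodule.subset_span ⟨x, hx, v ^ p, Ph_pow_mem hv, ?_⟩
    simp only [smul_eq_mul]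
    rw [mul_pow, ← pow_mul, ← pow_succ]
  · refine Submodule.span_le.2 ?_
    rintro _ ⟨x, hx, v, hv, rfl⟩
    unfold Ph at hv
    simp only [SetLike.mem_coe]
    induction hv using Submodule.span_induction with
    | mem w hw =>
      obtain ⟨w, hw, rfl⟩ := hw
      have : x ^ p ^ (m + 1) • w ^ p = (x ^ p ^ m • w) ^ p := by
        simp only [smul_eq_mul]
        rw [mul_pow, ← pow_mul, ← pow_succ]
      simp only
      rw [this]
      exact Ph_pow_mem (Submodule.subset_span ⟨x, hx, w, hw, rfl⟩)
    | zero => rw [smul_zero]; exact Submodule.zero_mem _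
    | add a b _ _ h1 h2 => rw [smul_add]; exact Submodule.add_mem _ h1 h2
    | smul c a _ h1 => rw [smul_comm]; exact Submodule.smul_mem _ _ h1

lemma Ph_comp {X : Submodule k R} (hX : Hg 𝒜 X) {z : R} (hz : z ∈ Ph p X) (j : ℤ) :
    (DirectSum.decompose 𝒜 z j : R) ∈ Submodule.span k {z | ∃ i, ∃ w ∈ X ⊓ 𝒜 i, (p : ℤ) * i = j ∧ z = w ^ p} := by
  classical
  unfold Ph at hz
  induction hz using Submodule.span_induction with
  | mem w hw =>
    obtain ⟨x, hx, rfl⟩ := hw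
    have h1 := pow_sum_comp (p := p) (𝒜 := 𝒜) 1 x
    simp only [pow_one] at h1
    simp only
    rw [h1, DirectSum.decompose_sum, DFinsupp.finsetSum_apply, AddSubmonoidClass.coe_finsetSum]
    refine Submodule.sum_mem _ fun i _ => ?_
    have h2 : (DirectSum.decompose 𝒜 x i : R) ^ p ∈ 𝒜 ((p : ℤ) * i) := by
      have := SetLike.pow_mem_graded p (SetLike.coe_mem (DirectSum.decompose 𝒜 x i))
      simpa using this
    by_cases hij : (p : ℤ) * i = j
    · subst hij
      rw [DirectSum.decompose_of_mem_same _ h2]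
      exact Submodule.subset_span ⟨i, _, ⟨hX x hx i, SetLike.coe_mem _⟩, rfl, rfl⟩
    · rw [DirectSum.decompose_of_mem_ne _ h2 hij]
      exact Submodule.zero_mem _
  | zero => simp
  | add a b _ _ h1 h2 => rw [DirectSum.decompose_add]; exact Submodule.add_mem _ h1 h2
  | smul c a _ h1 => rw [DirectSum.decompose_smul]; exact Submodule.smul_mem _ _ h1

lemma Ph_inf {X : Submodule k R} (hX : Hg 𝒜 X) (i : ℤ) : Ph p X ⊓ 𝒜 (p * i) = Ph p (X ⊓ 𝒜 i) := by
  have hp0 : (p : ℤ) ≠ 0 := by exact_mod_cast (Fact.out : p.Prime).ne_zero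
  apply le_antisymm
  · rintro z ⟨h1, h2⟩
    have h := Ph_comp hX h1 (p * i)
    rw [DirectSum.decompose_of_mem_same _ h2] at h
    refine (Submodule.span_le.2 ?_) h
    rintro _ ⟨i', w, hw, he, rfl⟩
    obtain rfl := mul_left_cancel₀ hp0 he
    exact Ph_pow_mem hw
  · refine le_inf (Ph_mono inf_le_left) (Submodule.span_le.2 ?_)
    rintro _ ⟨x, hx, rfl⟩
    have := SetLike.pow_mem_graded p hx.2
    simpa using this

lemma Ph_inf_bot {X : Submodule k R} (hX : Hg 𝒜 X) (j : ℤ) (hj : ∀ i, (p : ℤ) * i ≠ j) : Ph p X ⊓ 𝒜 j = ⊥ := by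
  rw [eq_bot_iff]
  rintro z ⟨h1, h2⟩
  have h := Ph_comp hX h1 j
  rw [DirectSum.decompose_of_mem_same _ h2] at h
  refine (Submodule.span_le.2 ?_) h
  rintro _ ⟨i', w, hw, he, rfl⟩
  exact (hj _ he).elim

lemma rl_quot (P : Ideal R) (W Y : Submodule k R) :
    rl (ρ P ⊔ W) Y = rl (W.map (Ideal.Quotient.mkₐ k P).toLinearMap) (Y.map (Ideal.Quotient.mkₐ k P).toLinearMap) := by
  refine (rl_eq _ ?_).symm
  intro x _
  constructor
  · intro h
    obtain ⟨u, hu, v, hv, rfl⟩ := Submodule.mem_sup.1 h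
    refine ⟨v, hv, ?_⟩
    have : Ideal.Quotient.mk P u = 0 := Ideal.Quotient.eq_zero_iff_mem.2 hu
    simp [this]
  · rintro ⟨v, hv, h⟩
    have : x - v ∈ P := Ideal.Quotient.eq.1 h.symm
    rw [← sub_add_cancel x v]
    exact Submodule.add_mem_sup this hv

/-- MacLane's condition -/
def ML (k : Type) {D : Type} [Field k] [CommRing D] [Algebra k D] (p e : ℕ) : Prop :=
  ∀ (ι : Type) (x : ι → D), (∀ i, x i ∈ Submodule.span k (Set.range fun z : D => z ^ p ^ e)) →
      LinearIndependent k x → LinearIndependent k (fun i => x i ^ p)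

lemma Be_map (P : Ideal R) (e : ℕ) : (Subalgebra.toSubmodule (Be k R p e)).map (Ideal.Quotient.mkₐ k P).toLinearMap ≤
    Submodule.span k (Set.range fun z : R ⧸ P => z ^ p ^ e) := by
  rw [Be_span, Submodule.map_span]
  refine Submodule.span_mono ?_
  rintro _ ⟨_, ⟨x, rfl⟩, rfl⟩
  exact ⟨Ideal.Quotient.mk P x, by simp⟩

theorem HH_frob (y : ℂ) {P : Ideal R} [CharP (R ⧸ P) p] {e : ℕ} (hML : ML k (D := R ⧸ P) p e) {m : ℕ} (hm : e ≤ m) :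
    HH p I 𝒜 y (ρ P) (Subalgebra.toSubmodule (Be k R p (e + 1))) (m + 1) =
      HH p I 𝒜 y (ρ P) (Subalgebra.toSubmodule (Be k R p e)) m := by
  have hp0 : (p : ℤ) ≠ 0 := by exact_mod_cast (Fact.out : p.Prime).ne_zero
  have hpC : (p : ℂ) ≠ 0 := by exact_mod_cast (Fact.out : p.Prime).ne_zero
  set X := Subalgebra.toSubmodule (Be k R p e) with hXd
  have hX : Hg 𝒜 X := Hg_Be e
  rw [← Ph_Be]
  unfold HH hs
  rw [← Ph_br, ← hXd]
  have hinj : Function.Injective fun i : ℤ => (p : ℤ) * i := mul_right_injective₀ hp0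
  rw [← hinj.tsum_eq]
  · refine tsum_congr fun i => ?_
    congr 1
    · congr 2
      rw [Ph_inf hX, rl_quot, rl_quot, Ph_map, Ph_map]
      refine rl_Ph (V := X.map (Ideal.Quotient.mkₐ k P).toLinearMap) ?_ ?_ ?_
      · intro ι x hx
        exact hML ι x fun i => Be_map P e (hx i)
      · refine Submodule.map_mono (Submodule.span_le.2 ?_)
        rintro _ ⟨x, hx, v, hv, rfl⟩
        obtain ⟨n, rfl⟩ := Nat.exists_eq_add_of_le hm
        exact (Be k R p e).mul_mem (pow_mem_Be' e n x) hv
      · exact Submodule.map_mono inf_le_left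
    · unfold wt
      congr 1
      push_cast
      rw [pow_succ]
      field_simp
  · intro j hj
    by_contra hn
    apply hj
    beta_reduce
    rw [Ph_inf_bot hX j fun i hi => hn ⟨i, hi⟩]
    have : rl (ρ P ⊔ Ph p (br p I m X)) (⊥ : Submodule k R) = 0 := rl_zero_iff.2 bot_le
    simp [this]

lemma ML_rad {𝔠 : Ideal R} {e : ℕ} (hML : ML k (D := R ⧸ 𝔠) p e) : (ctr (k := k) p e 𝔠).IsRadical := by
  have h1 : ∀ x : Be k R p e, (x : R) ^ p ∈ 𝔠 → (x : R) ∈ 𝔠 := by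
    intro x hx
    by_contra hn
    have hne : Ideal.Quotient.mk 𝔠 (x : R) ≠ 0 := fun h => hn (Ideal.Quotient.eq_zero_iff_mem.1 h)
    have := hML Unit (fun _ => Ideal.Quotient.mk 𝔠 (x : R)) (fun _ => Be_map 𝔠 e ⟨x, x.2, rfl⟩)
      (LinearIndependent.of_subsingleton () hne)
    refine this.ne_zero () ?_
    rw [← map_pow]
    exact Ideal.Quotient.eq_zero_iff_mem.2 hx
  have h2 : ∀ (n : ℕ) (x : Be k R p e), (x : R) ^ p ^ n ∈ 𝔠 → (x : R) ∈ 𝔠 := by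
    intro n
    induction n with
    | zero => intro x hx; simpa using hx
    | succ n ih =>
      intro x hx
      refine ih x (h1 (x ^ p ^ n) ?_)
      push_cast
      rwa [← pow_mul, ← pow_succ]
  rintro x ⟨n, hn⟩
  refine h2 n x ?_
  have : (x : R) ^ n ∈ 𝔠 := hn
  exact Ideal.pow_mem_of_pow_mem _ this (Nat.lt_pow_self (Fact.out : p.Prime).one_lt).le

end Frob
end FP
end

open Filter Complex
set_option maxHeartbeats 1000000
set_option linter.unusedSectionVars false
set_option linter.unusedVariables false
noncomputable section
namespace FP
section Conv

lemma conv_aux {E : ℕ → ℂ} {r q C K : ℝ} (hr : 0 ≤ r) (hq0 : 0 < q) (hq : q < 1) (hK : 0 ≤ K)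
    (hC : ∀ m, ‖E m‖ ≤ C) (h : ∀ m, ‖E (m + 1) - r * E m‖ ≤ K * q ^ m) : ∃ L, Tendsto E atTop (nhds L) := by
  have hr' : ‖(r : ℂ)‖ = r := by simp [abs_of_nonneg hr]
  rcases lt_trichotomy r 1 with h1 | h1 | h1
  · refine ⟨0, ?_⟩
    obtain ⟨s, hs1, hs2⟩ := exists_between (max_lt h1 hq)
    have hrs : r < s := (le_max_left _ _).trans_lt hs1
    have hqs : q < s := (le_max_right _ _).trans_lt hs1
    set C' := max ‖E 0‖ (K / (s - r)) with hC'
    have hk : K ≤ C' * (s - r) := (div_le_iff₀ (by linarith)).1 (le_max_right _ _)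
    have hb : ∀ m, ‖E m‖ ≤ C' * s ^ m := by
      intro m
      induction m with
      | zero => simp [hC']
      | succ m ih =>
        have e1 : ‖E (m + 1)‖ ≤ K * q ^ m + r * ‖E m‖ := by
          have : E (m + 1) = (E (m + 1) - r * E m) + r * E m := by ring
          rw [this]
          refine (norm_add_le _ _).trans ?_
          rw [norm_mul, hr']
          gcongr
          exact h m
        have hs0 : 0 ≤ s := by linarith
        calc ‖E (m + 1)‖ ≤ K * q ^ m + r * ‖E m‖ := e1
          _ ≤ (C' * (s - r)) * s ^ m + r * (C' * s ^ m) := by gcongr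
          _ = C' * s ^ (m + 1) := by ring
    refine squeeze_zero_norm hb ?_
    rw [← mul_zero C']
    exact (tendsto_pow_atTop_nhds_zero_of_lt_one (by linarith) hs2).const_mul C'
  · refine cauchySeq_tendsto_of_complete (cauchySeq_of_le_geometric q K hq fun n => ?_)
    rw [dist_comm, dist_eq_norm]
    have := h n
    rwa [h1, Complex.ofReal_one, one_mul] at this
  · refine ⟨0, ?_⟩
    have hC0 : 0 ≤ C := (norm_nonneg _).trans (hC 0)
    have key : ∀ j m : ℕ, ‖E m‖ ≤ C * (1 / r) ^ j + K * q ^ m / (r - 1) := by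
      intro j
      induction j with
      | zero =>
        intro m
        have : 0 ≤ K * q ^ m / (r - 1) := div_nonneg (by positivity) (by linarith)
        simpa using (hC m).trans (by linarith)
      | succ j ih =>
        intro m
        have e1 : r * ‖E m‖ ≤ ‖E (m + 1)‖ + K * q ^ m := by
          rw [← hr', ← norm_mul]
          have : r * E m = E (m + 1) - (E (m + 1) - r * E m) := by ring
          rw [this]
          refine (norm_sub_le _ _).trans ?_
          gcongr
          exact h m
        have e2 : K * q ^ (m + 1) / (r - 1) ≤ K * q ^ m / (r - 1) := by
          have : 0 < r - 1 := by linarith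
          gcongr K * ?_ / (r - 1)
          exact pow_le_pow_of_le_one hq0.le hq.le (Nat.le_succ m)
        have e3 := ih (m + 1)
        have hr1 : r - 1 ≠ 0 := by linarith
        have hr2 : r ≠ 0 := by linarith
        have e4 : r * (C * (1 / r) ^ (j + 1) + K * q ^ m / (r - 1)) =
            C * (1 / r) ^ j + K * q ^ m / (r - 1) + K * q ^ m := by
          rw [pow_succ]; field_simp; ring
        have : r * ‖E m‖ ≤ r * (C * (1 / r) ^ (j + 1) + K * q ^ m / (r - 1)) := by rw [e4]; linarith
        exact le_of_mul_le_mul_left this (by linarith)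
    have hb : ∀ m, ‖E m‖ ≤ K * q ^ m / (r - 1) := by
      intro m
      refine ge_of_tendsto' (x := atTop) (f := fun j : ℕ => C * (1 / r) ^ j + K * q ^ m / (r - 1)) ?_ fun j => key j m
      have := (tendsto_pow_atTop_nhds_zero_of_lt_one (r := 1 / r) (by positivity) (by rw [div_lt_one] <;> linarith)).const_mul C
      simpa using this.add_const (K * q ^ m / (r - 1))
    refine squeeze_zero_norm hb ?_
    have := ((tendsto_pow_atTop_nhds_zero_of_lt_one hq0.le hq).const_mul K).div_const (r - 1)
    simpa using this

variable {p : ℕ} [Fact p.Prime]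

lemma Ap.tendsto {d : ℕ} {f : ℕ → ℂ} (h : Ap p d f) : Tendsto (fun m => f m / (p : ℂ) ^ (m * d)) atTop (nhds 0) := by
  have hp1 : (1 : ℝ) < p := by exact_mod_cast (Fact.out : p.Prime).one_lt
  obtain ⟨K, hK⟩ := h.bound
  refine squeeze_zero_norm' (a := fun m => K * (1 / (p : ℝ)) ^ m) ?_ ?_
  · filter_upwards [hK] with m hm
    have h0 : 0 < (p : ℝ) ^ (m * d) := by positivity
    rw [norm_div, norm_pow, Complex.norm_natCast, div_le_iff₀ h0]
    refine hm.trans (le_of_eq ?_)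
    rw [Real.norm_of_nonneg (by positivity), one_div, inv_pow]
    ring
  · rw [← mul_zero K]
    exact (tendsto_pow_atTop_nhds_zero_of_lt_one (by positivity) (by rw [div_lt_one] <;> linarith)).const_mul K

lemma conv_rec {d e r : ℕ} {a b : ℕ → ℂ} (hb : ∀ m, e ≤ m → b (m + 1) = a m)
    (hab : Ap p d fun m => a m - r * b m) (ha : a =O[atTop] fun m => (p : ℝ) ^ (m * d)) :
    ∃ L, Tendsto (fun m => a m / (p : ℂ) ^ (m * d)) atTop (nhds L) := by
  have hp1 : (1 : ℝ) < p := by exact_mod_cast (Fact.out : p.Prime).one_lt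
  have hp0 : (p : ℂ) ≠ 0 := by exact_mod_cast (Fact.out : p.Prime).ne_zero
  obtain ⟨K, hK0, hK⟩ := hab.exists_nonneg
  obtain ⟨C, hC⟩ := ha.bound
  rw [Asymptotics.IsBigOWith] at hK
  obtain ⟨N1, hN1⟩ := eventually_atTop.1 hK
  obtain ⟨N2, hN2⟩ := eventually_atTop.1 hC
  set N := max e (max N1 N2)
  have he : e ≤ N := le_max_left _ _
  have h1 : N1 ≤ N := (le_max_left _ _).trans (le_max_right _ _)
  have h2 : N2 ≤ N := (le_max_right _ _).trans (le_max_right _ _)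
  have hA : ∀ m, ‖(fun m => a (m + N) / (p : ℂ) ^ ((m + N) * d)) m‖ ≤ C := by
    intro m
    have h0 : 0 < (p : ℝ) ^ ((m + N) * d) := by positivity
    rw [norm_div, norm_pow, Complex.norm_natCast, div_le_iff₀ h0]
    have := hN2 (m + N) (by omega)
    rwa [Real.norm_of_nonneg (by positivity)] at this
  have hB : ∀ m, ‖(fun m => a (m + N) / (p : ℂ) ^ ((m + N) * d)) (m + 1) - ((r : ℝ) / (p : ℝ) ^ d : ℝ) * (fun m => a (m + N) / (p : ℂ) ^ ((m + N) * d)) m‖ ≤ K * (1 / (p : ℝ)) ^ m := by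
    intro m
    have h0 : 0 < (p : ℝ) ^ ((m + 1 + N) * d) := by positivity
    have e1 : a (m + 1 + N) / (p : ℂ) ^ ((m + 1 + N) * d) - ((r : ℝ) / (p : ℝ) ^ d : ℝ) * (a (m + N) / (p : ℂ) ^ ((m + N) * d))
        = (a (m + 1 + N) - r * b (m + 1 + N)) / (p : ℂ) ^ ((m + 1 + N) * d) := by
      rw [show m + 1 + N = (m + N) + 1 by ring, hb (m + N) (by omega), add_mul (m + N) 1 d, pow_add]
      push_cast
      rw [one_mul]
      field_simp
    rw [e1, norm_div, norm_pow, Complex.norm_natCast, div_le_iff₀ h0]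
    refine (hN1 (m + 1 + N) (by omega)).trans ?_
    rw [Real.norm_of_nonneg (by positivity), mul_assoc]
    gcongr
    rw [div_eq_mul_inv, mul_comm]
    gcongr
    rw [one_div, inv_pow]
    gcongr
    · exact hp1.le
    · omega
  obtain ⟨L, hL⟩ := conv_aux (by positivity) (by positivity) (by rw [div_lt_one] <;> linarith) hK0 hA hB
  exact ⟨L, (tendsto_add_atTop_iff_nat (f := fun m => a m / (p : ℂ) ^ (m * d)) N).1 hL⟩

end Conv
section Prime
variable {k R : Type} [Field k] [CommRing R] [Algebra k R] {p : ℕ} [Fact p.Prime] [CharP R p]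
   {𝒜 : ℤ → Submodule k R} [GradedAlgebra 𝒜] {I : Ideal R}

local notation "ρ" => Submodule.restrictScalars k

lemma Be_succ (e : ℕ) : Be k R p (e + 1) ≤ Be k R p e := by
  conv_lhs => unfold Be
  refine Algebra.adjoin_le ?_
  rintro _ ⟨x, rfl⟩
  exact pow_mem_Be' e 1 x

lemma charQ (P : Ideal R) [Nontrivial (R ⧸ P)] : CharP k p ∧ CharP (R ⧸ P) p := by
  have : Nontrivial R := (Ideal.Quotient.mk P).domain_nontrivial
  have h1 : CharP k p := (RingHom.charP_iff (algebraMap k R) (algebraMap k R).injective p).2 inferInstance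
  exact ⟨h1, charP_of_injective_algebraMap (algebraMap k (R ⧸ P)).injective p⟩

lemma exists_ML (D : Dat 𝒜 I) (P : Ideal R) [Nontrivial (R ⧸ P)] : ∃ e, ML k (D := R ⧸ P) p e := by
  have := D.ft
  have := (charQ (k := k) (p := p) P).1
  exact maclane p

theorem HH_conv (D : Dat 𝒜 I) (y : ℂ) {d : ℕ} {P : Ideal R} (hc : P.IsHomogeneous 𝒜)
    (hd : small (d + 1) P) (hr : P.IsPrime) :
    ∃ L, Tendsto (fun m => HH p I 𝒜 y (ρ P) ⊤ m / (p : ℂ) ^ (m * d)) atTop (nhds L) := by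
  have hnt : Nontrivial (R ⧸ P) := Ideal.Quotient.nontrivial_iff.2 hr.ne_top
  obtain ⟨h1, h2⟩ := charQ (k := k) (p := p) P
  obtain ⟨e, hML⟩ := exists_ML (p := p) D P
  let X : Submodule (Be k R p (e + 1)) R :=
    { carrier := (Be k R p e : Set R)
      add_mem' := fun ha hb => (Be k R p e).add_mem ha hb
      zero_mem' := (Be k R p e).zero_mem
      smul_mem' := fun c x hx => (Be k R p e).mul_mem (Be_succ e c.2) hx }
  have hX : ρ X = Subalgebra.toSubmodule (Be k R p e) := rfl
  obtain ⟨r, hr1⟩ := HH_mult D y (e + 1) hc hd hr (X := X) (by rw [hX]; exact Hg_Be e)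
  rw [hX] at hr1
  obtain ⟨L, hL⟩ := conv_rec (fun m hm => HH_frob y hML hm) hr1 (HH_bdd D y e hc hd)
  obtain ⟨r', hr2⟩ := HH_mult D y e hc hd hr (X := ⊤) Hg.top
  refine ⟨r' * L + 0, ?_⟩
  refine ((hL.const_mul (r' : ℂ)).add hr2.tendsto).congr fun m => ?_
  change _ = HH p I 𝒜 y (ρ P) (ρ (⊤ : Submodule (Be k R p e) R)) m / _
  ring

end Prime
end FP
end

open Filter Complex
set_option maxHeartbeats 1000000
set_option linter.unusedSectionVars false
set_option linter.unusedVariables false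
noncomputable section
namespace FP
section Len
variable {R : Type} [CommRing R]

lemma loc_zero {C : Type} [AddCommGroup C] [Module R C] (P : Ideal R) [P.IsPrime] {s : R} (hs : s ∉ P)
    (h : ∀ c : C, s • c = 0) : Module.length (Localization.AtPrime P) (LocalizedModule P.primeCompl C) = 0 := by
  rw [Module.length_eq_zero_iff, LocalizedModule.subsingleton_iff]
  exact fun m => ⟨s, hs, h m⟩

lemma loc_one {C : Type} [AddCommGroup C] [Module R C] (P : Ideal R) [P.IsPrime] {z : C} (hz : ∀ c : C, ∃ r : R, r • z = c)
    (h : ∀ r : R, r • z = 0 ↔ r ∈ P) : Module.length (Localization.AtPrime P) (LocalizedModule P.primeCompl C) = 1 := by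
  let A := Localization.AtPrime P
  let z0 : LocalizedModule P.primeCompl C := LocalizedModule.mk z 1
  have hz0 : z0 = LocalizedModule.mk z 1 := rfl
  let g : A →ₗ[A] LocalizedModule P.primeCompl C := LinearMap.toSpanSingleton A _ z0
  have hg : ∀ a : A, g a = a • z0 := fun a => LinearMap.toSpanSingleton_apply _ _ _ _
  have hsurj : Function.Surjective g := by
    intro x
    induction x using LocalizedModule.induction_on with
    | _ c s =>
      obtain ⟨r, rfl⟩ := hz c
      refine ⟨Localization.mk r s, ?_⟩
      rw [hg, hz0, LocalizedModule.mk_smul_mk, mul_one]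
  have hker : LinearMap.ker g = IsLocalRing.maximalIdeal A := by
    symm
    refine (IsLocalRing.maximalIdeal.isMaximal A).eq_of_le ?_ ?_
    · intro h1
      have : (1 : A) ∈ LinearMap.ker g := by rw [h1]; trivial
      rw [LinearMap.mem_ker, hg, one_smul, hz0, ← LocalizedModule.zero_mk 1, LocalizedModule.mk_eq] at this
      obtain ⟨u, hu⟩ := this
      rw [one_smul, smul_zero, smul_zero] at hu
      exact u.2 ((h u).1 hu)
    · rw [← Localization.AtPrime.map_eq_maximalIdeal, Ideal.map_le_iff_le_comap]
      intro r hr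
      change g (algebraMap R A r) = 0
      rw [hg, hz0, algebraMap_smul, LocalizedModule.smul'_mk, (h r).2 hr, LocalizedModule.zero_mk]
  have : IsSimpleModule A (LocalizedModule P.primeCompl C) := by
    rw [isSimpleModule_iff_quot_maximal]
    refine ⟨LinearMap.ker g, ?_, ⟨(g.quotKerEquivOfSurjective hsurj).symm⟩⟩
    rw [hker]; exact IsLocalRing.maximalIdeal.isMaximal A
  exact Module.length_eq_one _ _

variable {M : Type} [AddCommGroup M] [Module R M]

/-- local length -/
def ll (P : Ideal R) [P.IsPrime] (X : Submodule R M) : ℕ∞ :=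
  Module.length (Localization.AtPrime P) (LocalizedModule P.primeCompl X)

lemma ll_bot (P : Ideal R) [P.IsPrime] : ll P (⊥ : Submodule R M) = 0 := by
  refine loc_zero P (s := 1) ?_ fun c => Subsingleton.elim _ _
  rw [← Ideal.ne_top_iff_one]; exact Ideal.IsPrime.ne_top ‹_›

lemma ll_top (P : Ideal R) [P.IsPrime] : ll P (⊤ : Submodule R M) =
    Module.length (Localization.AtPrime P) (LocalizedModule P.primeCompl M) := by
  refine LinearEquiv.length_eq (LinearEquiv.ofBijective (LocalizedModule.map P.primeCompl (⊤ : Submodule R M).subtype) ⟨?_, ?_⟩)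
  · exact LocalizedModule.map_injective _ _ (Submodule.subtype_injective _)
  · exact LocalizedModule.map_surjective _ _ fun x => ⟨⟨x, trivial⟩, rfl⟩

lemma ll_step (P : Ideal R) [P.IsPrime] (N : Submodule R M) (z : M) :
    ll P (N ⊔ R ∙ z) = ll P N + Module.length (Localization.AtPrime P)
      (LocalizedModule P.primeCompl ((N ⊔ R ∙ z : Submodule R M) ⧸ N.submoduleOf (N ⊔ R ∙ z))) := by
  let f : N →ₗ[R] (N ⊔ R ∙ z : Submodule R M) := Submodule.inclusion le_sup_left
  let g := (N.submoduleOf (N ⊔ R ∙ z)).mkQ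
  refine Module.length_eq_add_of_exact (LocalizedModule.map P.primeCompl f) (LocalizedModule.map P.primeCompl g) ?_ ?_ ?_
  · exact LocalizedModule.map_injective _ _ (Submodule.inclusion_injective _)
  · exact LocalizedModule.map_surjective _ _ (Submodule.mkQ_surjective _)
  · refine LocalizedModule.map_exact P.primeCompl f g ?_
    intro x
    constructor
    · intro h
      have : x ∈ N.submoduleOf (N ⊔ R ∙ z) := (Submodule.Quotient.mk_eq_zero _).1 h
      exact ⟨⟨x, this⟩, rfl⟩
    · rintro ⟨x, rfl⟩
      exact (Submodule.Quotient.mk_eq_zero _).2 x.2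

/-- image of z -/
def zb (N : Submodule R M) (z : M) : (N ⊔ R ∙ z : Submodule R M) ⧸ N.submoduleOf (N ⊔ R ∙ z) :=
  Submodule.Quotient.mk ⟨z, Submodule.mem_sup_right (Submodule.mem_span_singleton_self z)⟩

lemma zb_gen (N : Submodule R M) (z : M) (c) : ∃ r : R, r • zb N z = c := by
  obtain ⟨⟨x, hx⟩, rfl⟩ := Submodule.Quotient.mk_surjective _ c
  obtain ⟨n, hn, v, hv, rfl⟩ := Submodule.mem_sup.1 hx
  obtain ⟨r, rfl⟩ := Submodule.mem_span_singleton.1 hv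
  refine ⟨r, ?_⟩
  unfold zb
  rw [← Submodule.Quotient.mk_smul, Submodule.Quotient.eq]
  change r • z - (n + r • z) ∈ N
  simpa using hn

lemma zb_zero (N : Submodule R M) (z : M) (r : R) : r • zb N z = 0 ↔ r ∈ N.colon {z} := by
  unfold zb
  rw [← Submodule.Quotient.mk_smul, Submodule.Quotient.mk_eq_zero, Submodule.mem_colon_singleton]
  rfl

lemma ll_step_eq (P : Ideal R) [P.IsPrime] (N : Submodule R M) (z : M) (h : N.colon {z} = P) :
    ll P (N ⊔ R ∙ z) = ll P N + 1 := by
  rw [ll_step, loc_one P (zb_gen N z) fun r => by rw [zb_zero, h]]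

lemma ll_step_ne (P : Ideal R) [P.IsPrime] (N : Submodule R M) (z : M) (h : ¬ N.colon {z} ≤ P) :
    ll P (N ⊔ R ∙ z) = ll P N := by
  obtain ⟨s, hs, hsP⟩ := SetLike.not_le_iff_exists.1 h
  rw [ll_step, loc_zero P hsP, add_zero]
  intro c
  obtain ⟨r, rfl⟩ := zb_gen N z c
  rw [smul_comm, (zb_zero N z s).2 hs, smul_zero]

lemma dim_coheight (P : PrimeSpectrum R) : ringKrullDim (R ⧸ P.asIdeal) = (Order.coheight P : ℕ∞) := by
  rw [ringKrullDim_quotient, Order.coheight_eq_krullDim_Ici]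
  congr!

lemma small_of_dim {𝔠 : Ideal R} {d : ℕ} (h : ringKrullDim (R ⧸ 𝔠) = d) : small (d + 1) 𝔠 := by
  intro P hP
  have h1 : ringKrullDim (R ⧸ P.asIdeal) ≤ ringKrullDim (R ⧸ 𝔠) :=
    ringKrullDim_le_of_surjective (Ideal.Quotient.factor hP) (Ideal.Quotient.factor_surjective hP)
  rw [h, dim_coheight] at h1
  have h2 : Order.coheight P ≤ (d : ℕ∞) := by exact_mod_cast h1
  refine h2.trans_lt ?_
  exact_mod_cast Nat.lt_succ_self d

end Len
section Cyc
variable {k R : Type} [Field k] [CommRing R] [Algebra k R] {p : ℕ} [Fact p.Prime] [CharP R p]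
   {𝒜 : ℤ → Submodule k R} [GradedAlgebra 𝒜] {I : Ideal R}
   {M : Type} [AddCommGroup M] [Module R M] [Module k M] [IsScalarTower k R M]
   {ℳ : ℤ → Submodule k M} [DirectSum.Decomposition ℳ]

local notation "ρ" => Submodule.restrictScalars k

lemma bracket_hom (hI : I.IsHomogeneous 𝒜) (n : ℕ) : (bracketPow I (p ^ n)).IsHomogeneous 𝒜 := by
  classical
  have : bracketPow I (p ^ n) = Ideal.span {c : R | ∃ x ∈ I, (∃ j, x ∈ 𝒜 j) ∧ c = x ^ p ^ n} := by
    apply le_antisymm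
    · refine Ideal.span_le.2 ?_
      rintro _ ⟨x, hx, rfl⟩
      simp only [SetLike.mem_coe]
      rw [pow_sum_comp (𝒜 := 𝒜)]
      exact Ideal.sum_mem _ fun j _ => Ideal.subset_span ⟨_, hI j hx, ⟨j, SetLike.coe_mem _⟩, rfl⟩
    · refine Ideal.span_mono ?_
      rintro c ⟨x, hx, -, rfl⟩
      exact ⟨x, hx, rfl⟩
  rw [this]
  refine Ideal.homogeneous_span _ _ ?_
  rintro c ⟨x, hx, ⟨j, hj⟩, rfl⟩
  exact ⟨p ^ n • j, SetLike.pow_mem_graded _ hj⟩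

lemma HH_cyc (D : Dat 𝒜 I) (y : ℂ) (hℳ : GrM 𝒜 ℳ) {N : Submodule R M} (hN : Hg ℳ (ρ N)) {z : M} {t : ℤ} (hz : z ∈ ℳ t) (m : ℕ) :
    HH p I ℳ y (ρ N) (ρ (N ⊔ R ∙ z)) m = wt y (p ^ m) t * HH p I 𝒜 y (ρ (N.colon {z})) ⊤ m := by
  unfold HH
  have e1 : ρ (N.colon {z}) ⊔ br p I m (⊤ : Submodule k R) = ρ (N.colon {z} ⊔ bracketPow I (p ^ m)) := by
    have := br_bracket (k := k) (p := p) (I := I) m (⊤ : Submodule R R)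
    rw [rs_sup, show (⊤ : Submodule k R) = ρ (⊤ : Submodule R R) from rfl, ← this, smul_eq_mul, Ideal.mul_top]
  rw [e1, ← br_bracket, ← rs_sup]
  have hXh := hN.supB (Hg.sing hℳ hz)
  refine hs_cyc y _ hℳ (hN.supB (Hg.smul hℳ (bracket_hom D.hI m) hXh)) le_sup_left hz ?_
  intro b
  rw [Submodule.smul_sup, ← sup_assoc, sup_eq_left.2 (Submodule.smul_le_right : bracketPow I (p ^ m) • N ≤ N)]
  constructor
  · intro h
    obtain ⟨u, hu, v, hv, huv⟩ := Submodule.mem_sup.1 h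
    obtain ⟨c, hc, rfl⟩ := Submodule.mem_smul_span_singleton.1 hv
    have : b - c ∈ N.colon {z} := by
      rw [Submodule.mem_colon_singleton, sub_smul, ← huv]; simpa using hu
    rw [← sub_add_cancel b c]
    exact Submodule.add_mem_sup this hc
  · intro h
    obtain ⟨u, hu, v, hv, rfl⟩ := Submodule.mem_sup.1 h
    rw [add_smul]
    exact Submodule.add_mem_sup (Submodule.mem_colon_singleton.1 hu)
      (Submodule.smul_mem_smul hv (Submodule.mem_span_singleton_self z))

lemma rl_ker {M' : Type} [AddCommGroup M'] [Module k M'] (g : M →ₗ[k] M') (W X : Submodule k M) (h : ∀ x, x ∈ W ↔ g x = 0) :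
    (rl W X).toNat = Module.finrank k (X.map g) := by
  rw [← rl_eq g (W' := ⊥) (fun x _ => by rw [h, Submodule.mem_bot]), rl_toNat]
  refine (Submodule.equivMapOfInjective (Submodule.mkQ (⊥ : Submodule k M')) ?_ (X.map g)).symm.finrank_eq
  rw [← LinearMap.ker_eq_bot, Submodule.ker_mkQ]

lemma FnGen_M (y : ℂ) (d n : ℕ) : FnGen k ℳ I p d n y = HH p I ℳ y (ρ (⊥ : Submodule R M)) (ρ (⊤ : Submodule R M)) n / (p : ℂ) ^ (n * d) := by
  unfold FnGen HH hs
  rw [one_div, inv_pow, ← pow_mul, div_eq_inv_mul]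
  congr 1
  refine tsum_congr fun j => ?_
  congr 1
  · unfold quotPieceDim
    congr 1
    symm
    rw [show ρ (⊤ : Submodule R M) ⊓ ℳ j = ℳ j from top_inf_eq _]
    refine rl_ker _ _ _ fun x => ?_
    rw [← br_bracket, show ρ (⊥ : Submodule R M) = ⊥ from rfl, bot_sup_eq]
    exact (Submodule.Quotient.mk_eq_zero (bracketPow I (p ^ n) • (⊤ : Submodule R M))).symm
  · unfold wt; push_cast; rfl

lemma FnGen_P (y : ℂ) (d n : ℕ) (P : Ideal R) :
    FnGen k (fun j : ℤ => ((𝒜 j).map (Ideal.Quotient.mkₐ k P).toLinearMap : Submodule k (R ⧸ P)))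
          (I.map (Ideal.Quotient.mk P)) p d n y = HH p I 𝒜 y (ρ P) ⊤ n / (p : ℂ) ^ (n * d) := by
  unfold FnGen HH hs
  rw [one_div, inv_pow, ← pow_mul, div_eq_inv_mul]
  congr 1
  refine tsum_congr fun j => ?_
  congr 1
  · unfold quotPieceDim
    congr 1
    symm
    rw [top_inf_eq, ← Submodule.map_comp]
    refine rl_ker _ _ _ fun x => ?_
    rw [show (⊤ : Submodule k R) = ρ (⊤ : Submodule R R) from rfl, ← br_bracket, ← rs_sup, smul_eq_mul, Ideal.mul_top]
    have e1 : bracketPow (I.map (Ideal.Quotient.mk P)) (p ^ n) • (⊤ : Submodule (R ⧸ P) (R ⧸ P)) =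
        (bracketPow I (p ^ n)).map (Ideal.Quotient.mk P) := by
      rw [smul_eq_mul, Ideal.mul_top]
      unfold bracketPow
      rw [Ideal.map_span, Set.image_image]
      congr 1
      ext z
      constructor
      · rintro ⟨w, hw, rfl⟩
        obtain ⟨x, hx, rfl⟩ := (Ideal.mem_map_iff_of_surjective _ Ideal.Quotient.mk_surjective).1 hw
        exact ⟨x, hx, map_pow _ _ _⟩
      · rintro ⟨x, hx, rfl⟩
        exact ⟨_, Ideal.mem_map_of_mem _ hx, (map_pow _ _ _).symm⟩
    have e2 := Ideal.comap_map_of_surjective (Ideal.Quotient.mk P) Ideal.Quotient.mk_surjective (bracketPow I (p ^ n))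
    rw [← RingHom.ker_eq_comap_bot, Ideal.mk_ker, sup_comm] at e2
    rw [← e2]
    change Ideal.Quotient.mk P x ∈ Ideal.map (Ideal.Quotient.mk P) (bracketPow I (p ^ n)) ↔ Submodule.Quotient.mk (Ideal.Quotient.mk P x) = 0
    rw [Submodule.Quotient.mk_eq_zero, e1]
  · unfold wt; push_cast; rfl

end Cyc
end FP
end

section
set_option linter.unusedSectionVars false
set_option linter.unusedVariables false
namespace FP
section Main
variable {k R : Type} [Field k] [CommRing R] [Algebra k R] {p : ℕ} [Fact p.Prime] [CharP R p]
   {𝒜 : ℤ → Submodule k R} [GradedAlgebra 𝒜] {I : Ideal R}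
   {M : Type} [AddCommGroup M] [Module R M] [Module k M] [IsScalarTower k R M]
   {ℳ : ℤ → Submodule k M} [DirectSum.Decomposition ℳ]

local notation "ρ" => Submodule.restrictScalars k

lemma ann_hom (hℳ : GrM 𝒜 ℳ) : (Module.annihilator R M).IsHomogeneous 𝒜 := by
  classical
  intro i r hr
  rw [Module.mem_annihilator] at hr ⊢
  intro x
  rw [← DirectSum.sum_support_decompose ℳ x, Finset.smul_sum]
  refine Finset.sum_eq_zero fun t _ => ?_
  rw [← dec_smul hℳ (SetLike.coe_mem (DirectSum.decompose ℳ x t)), hr]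
  simp

lemma min_hom {𝔠 P : Ideal R} (hc : 𝔠.IsHomogeneous 𝒜) (hP : P ∈ 𝔠.minimalPrimes) : P.IsHomogeneous 𝒜 := by
  have hpr : P.IsPrime := hP.1.1
  have h1 : (P.homogeneousCore 𝒜).toIdeal.IsPrime := hpr.homogeneousCore
  have h2 : 𝔠 ≤ (P.homogeneousCore 𝒜).toIdeal := by
    rw [← hc.toIdeal_homogeneousCore_eq_self]
    exact Ideal.homogeneousCore_mono 𝒜 hP.1.2
  have h3 : (P.homogeneousCore 𝒜).toIdeal ≤ P := Ideal.toIdeal_homogeneousCore_le 𝒜 P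
  have h4 : P ≤ (P.homogeneousCore 𝒜).toIdeal := hP.2 ⟨h1, h2⟩ h3
  rw [le_antisymm h4 h3]
  exact (P.homogeneousCore 𝒜).isHomogeneous

lemma wt_tendsto (y : ℂ) (t : ℤ) : Tendsto (fun m => wt y (p ^ m) t) atTop (nhds 1) := by
  have hp1 : (1 : ℝ) < p := by exact_mod_cast (Fact.out : p.Prime).one_lt
  have hp0 : 0 < p := (Fact.out : p.Prime).pos
  rw [tendsto_iff_norm_sub_tendsto_zero]
  refine squeeze_zero (fun _ => norm_nonneg _) (fun m => wt_sub_one y (pow_pos hp0 m) t) ?_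
  push_cast
  exact tendsto_const_nhds.div_atTop (tendsto_pow_atTop_atTop_of_one_lt hp1)

lemma coheight_of {d : ℕ} {P : PrimeSpectrum R} (h : ringKrullDim (R ⧸ P.asIdeal) = d) : Order.coheight P = d := by
  rw [dim_coheight] at h
  exact_mod_cast h

theorem main [Module.Finite R M] [IsNoetherianRing R] (D : Dat 𝒜 I) (y : ℂ) (hℳ : GrM 𝒜 ℳ) {d : ℕ}
    (hd : ringKrullDim (R ⧸ Module.annihilator R M) = d)
    (ι : Type) [Fintype ι] (P : ι → PrimeSpectrum R) (hinj : Function.Injective P)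
    (hmin : ∀ i, (P i).asIdeal ∈ (Module.annihilator R M).minimalPrimes ∧ ringKrullDim (R ⧸ (P i).asIdeal) = d)
    (hall : ∀ Q : PrimeSpectrum R, Q.asIdeal ∈ (Module.annihilator R M).minimalPrimes →
      ringKrullDim (R ⧸ Q.asIdeal) = d → ∃ i, P i = Q)
    (ℓ : ι → ℂ) (hℓ : ∀ i, Tendsto (fun m => HH p I 𝒜 y (ρ (P i).asIdeal) ⊤ m / (p : ℂ) ^ (m * d)) atTop (nhds (ℓ i))) :
    ∃ c : ι → ℕ, (∀ i, ll (P i).asIdeal (⊤ : Submodule R M) = c i) ∧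
      Tendsto (fun m => HH p I ℳ y (ρ (⊥ : Submodule R M)) (ρ (⊤ : Submodule R M)) m / (p : ℂ) ^ (m * d)) atTop
        (nhds (∑ i, (c i : ℂ) * ℓ i)) := by
  classical
  have hsm := small_of_dim hd
  have hann := ann_hom (𝒜 := 𝒜) hℳ
  have hnt : Nontrivial (R ⧸ Module.annihilator R M) := by
    by_contra hn
    rw [not_nontrivial_iff_subsingleton] at hn
    rw [ringKrullDim_eq_bot_of_subsingleton] at hd
    exact absurd hd (by simp)
  obtain ⟨e, hML⟩ := exists_ML (p := p) D (Module.annihilator R M)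
  have hrad := ML_rad hML
  have hnoeth : IsNoetherian R M := isNoetherian_of_isNoetherianRing_of_finite R M
  refine FI hℳ (N0 := ⊥) (X := ⊤) Hg.bot Hg.top bot_le
    (fun X => ∃ c : ι → ℕ, (∀ i, ll (P i).asIdeal X = c i) ∧
      Tendsto (fun m => HH p I ℳ y (ρ (⊥ : Submodule R M)) (ρ X) m / (p : ℂ) ^ (m * d)) atTop
        (nhds (∑ i, (c i : ℂ) * ℓ i))) ?_ ?_
  · refine ⟨0, fun i => by simp [ll_bot], ?_⟩
    have : ∀ m, HH p I ℳ y (ρ (⊥ : Submodule R M)) (ρ (⊥ : Submodule R M)) m = 0 := by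
      intro m
      unfold HH hs
      have h0 : ∀ j (W : Submodule k M), rl W (ρ (⊥ : Submodule R M) ⊓ ℳ j) = 0 := by
        intro j W
        rw [rl_zero_iff]
        exact inf_le_left.trans bot_le
      rw [← tsum_zero (α := ℂ) (β := ℤ)]
      refine tsum_congr fun j => ?_
      rw [h0]; simp
    simp only [this]
    simp
  · rintro N z t hN - - - hz hQ ⟨c, hc1, hc2⟩
    set Q := N.colon {z} with hQd
    have hQhom : Q.IsHomogeneous 𝒜 := Hg.colon hℳ hN hz
    have hannQ : Module.annihilator R M ≤ Q := by
      intro r hr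
      rw [hQd, Submodule.mem_colon_singleton, Module.mem_annihilator.1 hr]
      exact N.zero_mem
    have hadd := (HH_add D y e hℳ hann hsm hrad (U := ⊥) (N := N) (X := N ⊔ R ∙ z) Hg.bot hN
      (hN.supB (Hg.sing hℳ hz)) bot_le le_sup_left (fun b hb x _ => by
        rw [Module.mem_annihilator.1 hb]; exact Submodule.zero_mem _)).tendsto
    have key : ∀ L, Tendsto (fun m => HH p I 𝒜 y (ρ Q) ⊤ m / (p : ℂ) ^ (m * d)) atTop (nhds L) →
        Tendsto (fun m => HH p I ℳ y (ρ (⊥ : Submodule R M)) (ρ (N ⊔ R ∙ z)) m / (p : ℂ) ^ (m * d)) atTop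
          (nhds (∑ i, (c i : ℂ) * ℓ i + L)) := by
      intro L hL
      have h := (hadd.add hc2).add ((wt_tendsto (p := p) y t).mul hL)
      rw [zero_add, one_mul] at h
      refine h.congr fun m => ?_
      rw [HH_cyc D y hℳ hN hz]
      ring
    let Q' : PrimeSpectrum R := ⟨Q, hQ⟩
    have hQc : Order.coheight Q' < (d + 1 : ℕ) := hsm Q' hannQ
    have hle : ∀ i, Q ≤ (P i).asIdeal → Q = (P i).asIdeal := fun i h =>
      le_antisymm h ((hmin i).1.2 ⟨hQ, hannQ⟩ h)
    by_cases hQd' : Order.coheight Q' < d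
    · refine ⟨c, fun i => ?_, ?_⟩
      · rw [ll_step_ne _ N z, hc1]
        intro h
        have h1 : Q' = P i := PrimeSpectrum.ext (hle i h)
        rw [h1, coheight_of (hmin i).2] at hQd'
        exact lt_irrefl _ hQd'
      · have hs : small d Q := fun P' hP' =>
          (Order.coheight_anti (show Q' ≤ P' from hP')).trans_lt hQd'
        have := key 0 (HH_small D y hQhom hs).tendsto
        rwa [add_zero] at this
    · have hQe : Order.coheight Q' = d := by
        refine le_antisymm ?_ (not_lt.1 hQd')
        rw [Nat.cast_add, Nat.cast_one] at hQc
        exact Order.le_of_lt_add_one hQc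
      have hQmin : Q ∈ (Module.annihilator R M).minimalPrimes := by
        refine ⟨⟨hQ, hannQ⟩, ?_⟩
        rintro P' ⟨hP', haP'⟩ hle'
        by_contra hnle
        let P'' : PrimeSpectrum R := ⟨P', hP'⟩
        have hlt : P'' < Q' := lt_of_le_not_ge hle' hnle
        have h1 := Order.coheight_strictAnti hlt (by rw [hQe]; exact ENat.natCast_lt_top d)
        have h2 := hsm P'' haP'
        rw [hQe] at h1
        rw [Nat.cast_add, Nat.cast_one] at h2
        exact absurd (Order.le_of_lt_add_one h2) (not_le.2 h1)
      obtain ⟨i0, hi0⟩ := hall Q' hQmin (by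
        rw [dim_coheight, hQe]; rfl)
      have hi0' : (P i0).asIdeal = Q := by rw [hi0]
      refine ⟨fun i => c i + if i = i0 then 1 else 0, fun i => ?_, ?_⟩
      · by_cases hi : i = i0
        · subst hi
          rw [ll_step_eq _ N z hi0'.symm, hc1]
          simp
        · rw [ll_step_ne _ N z, hc1]
          · simp [hi]
          · intro h
            refine hi (hinj (PrimeSpectrum.ext ?_))
            rw [← hle i h, hi0']
      · have h := hℓ i0
        rw [hi0'] at h
        have := key _ h
        convert this using 2
        simp [add_mul, Finset.sum_add_distrib]

end Main
end FP
end

/-- **Localization formula for Frobenius–Poincaré functions.**  If `M` has Krull dimension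
`d` and `P₁, …, P_t` are the `d`-dimensional minimal primes in the support of `M`, then
`F(M,R,I,d)(y) = Σ_j λ_{R_{P_j}}(M_{P_j}) · F(R/P_j, R/P_j, I·R/P_j, d)(y)`. -/
theorem frobenius_poincare_localization
    (k R M : Type) [Field k] [CommRing R] [Algebra k R] [Algebra.FiniteType k R]
    (p : ℕ) (hp : p.Prime) [CharP R p]
    (𝒜 : ℤ → Submodule k R) [GradedAlgebra 𝒜]
    (h𝒜neg : ∀ t : ℤ, t < 0 → 𝒜 t = ⊥)
    (h𝒜zero : ∀ x ∈ 𝒜 0, ∃ c : k, algebraMap k R c = x)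
    (I : Ideal R) (hI : Ideal.IsHomogeneous 𝒜 I) (hIfl : IsFiniteLength R (R ⧸ I))
    [AddCommGroup M] [Module R M] [Module k M] [IsScalarTower k R M] [Module.Finite R M]
    (ℳ : ℤ → Submodule k M) [DirectSum.Decomposition ℳ]
    (hℳ : ∀ (a b : ℤ), ∀ r ∈ 𝒜 a, ∀ x ∈ ℳ b, r • x ∈ ℳ (a + b))
    (dM : ℕ) (hdM : ringKrullDim (R ⧸ Module.annihilator R M) = dM)
    (y : ℂ) :
    ∃ (L : ℂ)
      (c : {P : PrimeSpectrum R //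
              P.asIdeal ∈ (Module.annihilator R M).minimalPrimes ∧
              ringKrullDim (R ⧸ P.asIdeal) = dM} → ℕ)
      (ℓ : {P : PrimeSpectrum R //
              P.asIdeal ∈ (Module.annihilator R M).minimalPrimes ∧
              ringKrullDim (R ⧸ P.asIdeal) = dM} → ℂ),
      Tendsto (fun n : ℕ => FnGen k ℳ I p dM n y) atTop (nhds L) ∧
      (∀ P, moduleLength (Localization.AtPrime P.1.asIdeal)
              (LocalizedModule P.1.asIdeal.primeCompl M) = ((c P : ℕ∞) : WithBot ℕ∞)) ∧
      (∀ P, Tendsto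
        (fun n : ℕ => FnGen k
          (fun j : ℤ => ((𝒜 j).map (Ideal.Quotient.mkₐ k P.1.asIdeal).toLinearMap :
            Submodule k (R ⧸ P.1.asIdeal)))
          (I.map (Ideal.Quotient.mk P.1.asIdeal)) p dM n y) atTop (nhds (ℓ P))) ∧
      L = ∑' P, (c P : ℂ) * ℓ P := by
  have hpf : Fact p.Prime := ⟨hp⟩
  have hnoeth : IsNoetherianRing R := Algebra.FiniteType.isNoetherianRing k R
  have D : FP.Dat 𝒜 I := ⟨h𝒜neg, h𝒜zero, hI, hIfl, inferInstance⟩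
  have hfin : Finite {P : PrimeSpectrum R // P.asIdeal ∈ (Module.annihilator R M).minimalPrimes ∧
              ringKrullDim (R ⧸ P.asIdeal) = dM} := by
    have h1 := (Ideal.finite_minimalPrimes_of_isNoetherianRing R (Module.annihilator R M)).to_subtype
    refine Finite.of_injective (β := (Module.annihilator R M).minimalPrimes) (fun P => ⟨P.1.asIdeal, P.2.1⟩) ?_
    intro P Q h
    exact Subtype.ext (PrimeSpectrum.ext (congrArg Subtype.val h))
  have hft := Fintype.ofFinite {P : PrimeSpectrum R // P.asIdeal ∈ (Module.annihilator R M).minimalPrimes ∧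
              ringKrullDim (R ⧸ P.asIdeal) = dM}
  have hconv := fun P : {P : PrimeSpectrum R // P.asIdeal ∈ (Module.annihilator R M).minimalPrimes ∧
              ringKrullDim (R ⧸ P.asIdeal) = dM} =>
    FP.HH_conv (p := p) D y (d := dM) (FP.min_hom (FP.ann_hom hℳ) P.2.1) (FP.small_of_dim P.2.2) P.1.2
  choose ℓ hℓ using hconv
  obtain ⟨c, hc1, hc2⟩ := FP.main (ℳ := ℳ) D y hℳ hdM _ (fun P : {P : PrimeSpectrum R //
      P.asIdeal ∈ (Module.annihilator R M).minimalPrimes ∧ ringKrullDim (R ⧸ P.asIdeal) = dM} => P.1)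
    Subtype.val_injective (fun P => P.2) (fun Q h1 h2 => ⟨⟨Q, h1, h2⟩, rfl⟩) ℓ hℓ
  refine ⟨_, c, ℓ, hc2.congr fun m => (FP.FnGen_M y dM m).symm, fun P => ?_, fun P => ?_, ?_⟩
  · unfold moduleLength
    rw [← Module.coe_length, ← FP.ll_top, hc1]
  · exact (hℓ P).congr fun m => (FP.FnGen_P y dM m _).symm
  · rw [tsum_fintype]

end
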